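/- Let 0 < r ≤ 1 ≤ R, ε > 0, and let λ be one of the four phases λ_{ε₁,ε₂}. Let q ∈ (2, ∞] and p ≥ 4q/(q−2) (or (p,q) = (∞,2)). Then there exists a constant C > 0, depending only on γ̄, ψ, p and q, such that for every f ∈ L²(ℝ³), ‖Ψ_{r,R}(D) G_λ(·) f‖_{L^p((0,∞); L^q(ℝ³))} ≤ C R^{3/2 − 3/q} r^{−4/p} ε^{1/p} ‖f‖_{L²(ℝ³)}. In particular the endpoint exponent p = 4q/(q−2) is included. -/

import Mathlib

/- Common setup: the space ℝ³ (as a Euclidean space), Fourier transform,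
   partial derivatives, Sobolev-type norms. -/

noncomputable section

open MeasureTheory Real Complex Filter ENNReal

/-- The space `ℝ³`. -/
abbrev E3 : Type := EuclideanSpace ℝ (Fin 3)

/-- Fourier transform on `ℝ³`. -/
def FT (f : E3 → ℂ) : E3 → ℂ := FourierTransform.fourier f

/-- Inverse Fourier transform on `ℝ³`. -/
def FTinv (f : E3 → ℂ) : E3 → ℂ := FourierTransformInv.fourierInv f

/-- The point `(x₁, x₂, x₃) ∈ ℝ³`. -/
def pt (x1 x2 x3 : ℝ) : E3 := (EuclideanSpace.equiv (Fin 3) ℝ).symm ![x1, x2, x3]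

/-- Fourier transform of a real-valued function. -/
def FTr (f : E3 → ℝ) : E3 → ℂ := FT (fun x => (f x : ℂ))

/-- Partial derivative `∂ᵢ` of a real-valued function. -/
def pd (i : Fin 3) (f : E3 → ℝ) (x : E3) : ℝ := fderiv ℝ f x (EuclideanSpace.single i 1)

/-- Partial derivative `∂ᵢ` of a complex-valued function. -/
def pdC (i : Fin 3) (f : E3 → ℂ) (x : E3) : ℂ := fderiv ℝ f x (EuclideanSpace.single i 1)

/-- A smooth cut-off function `ψ` with values in `[0,1]`, equal to `1` on `(-∞,1]`
and to `0` on `[2,∞)`. -/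
def IsCutoff (ψ : ℝ → ℝ) : Prop :=
  ContDiff ℝ (⊤ : ℕ∞) ψ ∧ (∀ x, ψ x ∈ Set.Icc (0:ℝ) 1) ∧ (∀ x ≤ (1:ℝ), ψ x = 1) ∧
    (∀ x, (2:ℝ) ≤ x → ψ x = 0)

/-- The norm `|ξ_h|` of the horizontal component of a frequency `ξ`. -/
def xih (ξ : E3) : ℝ := Real.sqrt (ξ 0 ^ 2 + ξ 1 ^ 2)

/-- The frequency cut-off function `Ψ_{r,R}`. -/
def Psi (ψ : ℝ → ℝ) (r R : ℝ) (ξ : E3) : ℝ :=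
  ψ (‖ξ‖ / R) * ((1 - ψ (xih ξ / r)) * (1 - ψ (|ξ 2| / r)))

/-- The set `C_{r,R} = {ξ : |ξ| ≤ R, |ξ_h| ≥ r, |ξ₃| ≥ r}`. -/
def CrR (r R : ℝ) : Set E3 := {ξ | ‖ξ‖ ≤ R ∧ r ≤ xih ξ ∧ r ≤ |ξ 2|}

/-- The frequency cut-off operator `Ψ_{r,R}(D) g = 𝓕⁻¹(Ψ_{r,R} ĝ)`. -/
def PsiD (ψ : ℝ → ℝ) (r R : ℝ) (g : E3 → ℂ) : E3 → ℂ :=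
  FTinv (fun ξ => (Psi ψ r R ξ : ℂ) * FT g ξ)

/-- The eigenvalues `λ_{ε₁,ε₂}(ξ)` of `B̂(ξ)`. -/
def lamEV (γ ε1 ε2 : ℝ) (ξ : E3) : ℂ :=
  (ε1 : ℂ) * (Complex.I / 2) *
    (((Real.sqrt (1 + γ ^ 2 * ‖ξ‖ ^ 2 + 2 * γ * ξ 2) +
      ε2 * Real.sqrt (1 + γ ^ 2 * ‖ξ‖ ^ 2 - 2 * γ * ξ 2)) : ℝ) : ℂ)

/-- The cut-off scalar propagator `Ψ_{r,R}(D) G_λ(t) f = 𝓕⁻¹(Ψ_{r,R}(ξ) e^{(t/ε)λ(ξ)} f̂(ξ))`. -/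
def PsiG (ψ : ℝ → ℝ) (r R γ ε1 ε2 ε t : ℝ) (f : E3 → ℂ) : E3 → ℂ :=
  FTinv (fun ξ => ((Psi ψ r R ξ : ℝ) : ℂ) *
    Complex.exp (((t / ε : ℝ) : ℂ) * lamEV γ ε1 ε2 ξ) * FT f ξ)

open FourierTransform in
theorem planch_ae (f : E3 → ℂ) (h1 : Integrable f) (h2 : MemLp f 2 volume) :
    ((𝓕 (h2.toLp f) : Lp ℂ 2 (volume : Measure E3)) : E3 → ℂ) =ᵐ[volume] 𝓕 f := by
  have hc : Continuous (𝓕 f) := VectorFourier.fourierIntegral_continuous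
    Real.continuous_fourierChar (by exact continuous_inner) h1
  apply ae_eq_of_integral_contDiff_smul_eq
  · exact (Lp.memLp _).locallyIntegrable (by norm_num)
  · exact hc.locallyIntegrable
  intro g hg hgc
  have hGc : HasCompactSupport (fun x => (g x : ℂ)) := hgc.comp_left (g := fun x : ℝ => (x : ℂ)) (by simp)
  set G : SchwartzMap E3 ℂ := hGc.toSchwartzMap (Complex.ofRealCLM.contDiff.comp hg) with hG
  have hGa : ∀ x, G x = (g x : ℂ) := fun x => rfl
  have e1 := congrArg (fun T : TemperedDistribution E3 ℂ => T G) (Lp.fourier_toTemperedDistribution_eq (h2.toLp f))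
  simp only [TemperedDistribution.fourier_apply, Lp.toTemperedDistribution_apply] at e1
  have e2 : ∫ x, (𝓕 G) x • (h2.toLp f) x = ∫ x, (𝓕 (G : E3 → ℂ)) x • f x := by
    apply integral_congr_ae
    filter_upwards [h2.coeFn_toLp] with x hx
    rw [hx]; rfl
  have e3 := VectorFourier.integral_fourierIntegral_smul_eq_flip (e := Real.fourierChar) (μ := volume) (ν := volume)
    (L := innerₗ E3) (f := (G : E3 → ℂ)) (g := f) Real.continuous_fourierChar (by exact continuous_inner) G.integrable h1
  calc ∫ x, g x • (𝓕 (h2.toLp f) : Lp ℂ 2 (volume : Measure E3)) x = ∫ x, G x • (𝓕 (h2.toLp f) : Lp ℂ 2 (volume : Measure E3)) x := by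
        simp [hGa]
    _ = ∫ x, (𝓕 G) x • (h2.toLp f) x := e1.symm
    _ = _ := e2
    _ = ∫ x, G x • 𝓕 f x := by
        rw [flip_innerₗ] at e3
        exact e3
    _ = _ := by simp [hGa]

open FourierTransform in
theorem planch (f : E3 → ℂ) (h1 : Integrable f) (h2 : MemLp f 2 volume) :
    eLpNorm (FT f) 2 volume = eLpNorm f 2 volume := by
  have h := eLpNorm_congr_ae (p := 2) (planch_ae f h1 h2)
  unfold FT
  rw [← h]
  have h3 := Lp.norm_fourier_eq (h2.toLp f)
  rw [Lp.norm_def, Lp.norm_def, ENNReal.toReal_eq_toReal_iff' (Lp.eLpNorm_ne_top _) (Lp.eLpNorm_ne_top _)] at h3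
  rw [h3]
  exact eLpNorm_congr_ae h2.coeFn_toLp

theorem planch_inv (f : E3 → ℂ) (h1 : Integrable f) (h2 : MemLp f 2 volume) :
    eLpNorm (FTinv f) 2 volume = eLpNorm f 2 volume := by
  rw [← planch f h1 h2]
  have : FTinv f = fun x => FT f (-x) := by
    ext x; exact Real.fourierInv_eq_fourier_neg f x
  rw [this]
  exact eLpNorm_comp_measurePreserving (p := 2) (f := fun x : E3 => -x) (g := FT f)
    (VectorFourier.fourierIntegral_continuous
    Real.continuous_fourierChar (by exact continuous_inner) h1).aestronglyMeasurable (Measure.measurePreserving_neg volume)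


theorem lint_abs (G : ℝ → ℝ≥0∞) (c : ℝ≥0∞) (h : ∫⁻ s in Set.Ioi (0:ℝ), G s ≤ c) : ∫⁻ s, G |s| ≤ 2 * c := by
  rw [← lintegral_add_compl _ (measurableSet_Ioi (a := (0:ℝ)))]
  have e1 : ∫⁻ s in Set.Ioi (0:ℝ), G |s| = ∫⁻ s in Set.Ioi (0:ℝ), G s := by
    apply setLIntegral_congr_fun measurableSet_Ioi
    intro s hs; simp only [abs_of_pos (Set.mem_Ioi.1 hs)]
  have e2 : ∫⁻ s in (Set.Ioi (0:ℝ))ᶜ, G |s| = ∫⁻ s in Set.Ioi (0:ℝ), G s := by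
    rw [Set.compl_Ioi, setLIntegral_congr (Iio_ae_eq_Iic (a := (0:ℝ))).symm]
    have := (Measure.measurePreserving_neg (volume : Measure ℝ)).setLIntegral_comp_preimage_emb
      (MeasurableEquiv.neg ℝ).measurableEmbedding G (Set.Ioi 0)
    rw [← this]
    have : (Neg.neg ⁻¹' Set.Ioi (0:ℝ)) = Set.Iio 0 := by ext; simp
    rw [this]
    apply setLIntegral_congr_fun measurableSet_Iio
    intro s hs; simp only [abs_of_neg (Set.mem_Iio.1 hs)]
  rw [e1, e2, two_mul]
  exact add_le_add h h

theorem lint_near (ρ : ℝ) (hρ : 0 < ρ) :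
    ∫⁻ s, (Set.Iic ρ).indicator (fun s => (ENNReal.ofReal s) ^ (-(1/2):ℝ)) |s| ≤ 2 * ENNReal.ofReal (2 * ρ ^ (1/2:ℝ)) := by
  apply lint_abs (fun s => (Set.Iic ρ).indicator (fun s => (ENNReal.ofReal s) ^ (-(1/2):ℝ)) s)
  rw [lintegral_indicator measurableSet_Iic, Measure.restrict_restrict measurableSet_Iic, Set.inter_comm, Set.Ioi_inter_Iic]
  have : ∫⁻ s in Set.Ioc 0 ρ, (ENNReal.ofReal s) ^ (-(1/2):ℝ) = ∫⁻ s in Set.Ioc 0 ρ, ENNReal.ofReal (s ^ (-(1/2):ℝ)) := by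
    apply setLIntegral_congr_fun measurableSet_Ioc
    intro s hs
    exact ENNReal.ofReal_rpow_of_pos hs.1
  rw [this, ← ofReal_integral_eq_lintegral_ofReal]
  · rw [← intervalIntegral.integral_of_le hρ.le, integral_rpow (by left; norm_num)]
    apply ENNReal.ofReal_le_ofReal
    norm_num
    linarith
  · have := (intervalIntegral.intervalIntegrable_rpow' (a := 0) (b := ρ) (r := -(1/2)) (by norm_num))
    rwa [intervalIntegrable_iff_integrableOn_Ioc_of_le hρ.le] at this
  · filter_upwards [ae_restrict_mem measurableSet_Ioc] with s hs
    exact Real.rpow_nonneg hs.1.le _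

theorem lint_far (ρ : ℝ) (hρ : 0 < ρ) :
    ∫⁻ s, (Set.Ioi ρ).indicator (fun s => (ENNReal.ofReal s) ^ (-2:ℝ)) |s| ≤ 2 * ENNReal.ofReal (ρ⁻¹) := by
  apply lint_abs (fun s => (Set.Ioi ρ).indicator (fun s => (ENNReal.ofReal s) ^ (-2:ℝ)) s)
  rw [lintegral_indicator measurableSet_Ioi, Measure.restrict_restrict measurableSet_Ioi, Set.Ioi_inter_Ioi]
  have hm : max ρ 0 = ρ := max_eq_left hρ.le
  simp only [hm]
  have : ∫⁻ s in Set.Ioi ρ, (ENNReal.ofReal s) ^ (-2:ℝ) = ∫⁻ s in Set.Ioi ρ, ENNReal.ofReal (s ^ (-2:ℝ)) := by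
    apply setLIntegral_congr_fun measurableSet_Ioi
    intro s hs
    exact ENNReal.ofReal_rpow_of_pos (hρ.trans hs)
  rw [this, ← ofReal_integral_eq_lintegral_ofReal]
  · rw [integral_Ioi_rpow_of_lt (by norm_num) hρ]
    apply ENNReal.ofReal_le_ofReal
    norm_num
    rw [Real.rpow_neg_one]
  · exact integrableOn_Ioi_rpow_of_lt (by norm_num) hρ
  · filter_upwards [ae_restrict_mem measurableSet_Ioi] with s hs
    exact Real.rpow_nonneg (hρ.trans hs).le _

/-- kernel -/
def hk (s : ℝ) : ℝ≥0∞ := (ENNReal.ofReal |s|) ^ (-(1/2):ℝ)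

theorem hk_meas : Measurable hk := by unfold hk; fun_prop

theorem hls_inner (f : ℝ → NNReal) (hf : Measurable f) (M : ℝ) (hM : 0 < M)
    (hfM : ∫⁻ s, (f s : ℝ≥0∞) ^ (4/3:ℝ) = ENNReal.ofReal M) (t b : ℝ) (hb : 0 < b) :
    ∫⁻ s, {s | (f s : ℝ) ≤ b}.indicator (fun s => (f s : ℝ≥0∞) * hk (t - s)) s ≤ 6 * ENNReal.ofReal (M ^ (1/2:ℝ) * b ^ (1/3:ℝ)) := by
  set ρ : ℝ := M * b ^ (-(4/3):ℝ) with hρd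
  have hρ : 0 < ρ := by positivity
  have hpt : ∀ s, {s | (f s : ℝ) ≤ b}.indicator (fun s => (f s : ℝ≥0∞) * hk (t - s)) s ≤
      ENNReal.ofReal b * (Set.Iic ρ).indicator (fun s => (ENNReal.ofReal s) ^ (-(1/2):ℝ)) |t - s|
      + (f s : ℝ≥0∞) * (Set.Ioi ρ).indicator (fun s => (ENNReal.ofReal s) ^ (-(1/2):ℝ)) |t - s| := by
    intro s
    by_cases h1 : (f s : ℝ) ≤ b
    · rw [Set.indicator_of_mem (by exact h1)]
      by_cases h2 : |t - s| ≤ ρ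
      · rw [Set.indicator_of_mem (by exact h2)]
        refine le_add_right (mul_le_mul_left ?_ _)
        rw [← ENNReal.ofReal_coe_nnreal]
        exact ENNReal.ofReal_le_ofReal h1
      · rw [Set.indicator_of_mem (s := Set.Ioi ρ) (by exact not_le.1 h2)]
        exact le_add_left le_rfl
    · rw [Set.indicator_of_notMem (by exact h1)]; exact zero_le
  refine (lintegral_mono hpt).trans ?_
  rw [lintegral_add_left (by
    refine Measurable.const_mul ?_ _
    exact (Measurable.indicator (by fun_prop) measurableSet_Iic).comp (by fun_prop : Measurable fun s => |t - s|))]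
  have hn := lint_near ρ hρ
  have hfar := lint_far ρ hρ
  rw [← lintegral_sub_left_eq_self _ t] at hn hfar
  rw [lintegral_const_mul _ (by
    exact (Measurable.indicator (by fun_prop) measurableSet_Iic).comp (by fun_prop : Measurable fun s => |t - s|))]
  have hH := ENNReal.lintegral_mul_le_Lp_mul_Lq (volume : Measure ℝ) (p := 4/3) (q := 4)
    (by constructor <;> norm_num) (f := fun s => (f s : ℝ≥0∞))
    (g := fun s => (Set.Ioi ρ).indicator (fun s => (ENNReal.ofReal s) ^ (-(1/2):ℝ)) |t - s|)
    (by fun_prop) (by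
      exact ((Measurable.indicator (by fun_prop) measurableSet_Ioi).comp (by fun_prop : Measurable fun s => |t - s|)).aemeasurable)
  have e4 : ∀ s, ((Set.Ioi ρ).indicator (fun s => (ENNReal.ofReal s) ^ (-(1/2):ℝ)) |t - s|) ^ (4:ℝ) =
      (Set.Ioi ρ).indicator (fun s => (ENNReal.ofReal s) ^ (-2:ℝ)) |t - s| := by
    intro s
    by_cases h2 : |t - s| ∈ Set.Ioi ρ
    · rw [Set.indicator_of_mem h2, Set.indicator_of_mem h2, ← ENNReal.rpow_mul]; norm_num
    · rw [Set.indicator_of_notMem h2, Set.indicator_of_notMem h2]; norm_num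
  simp only [Pi.mul_apply, e4, hfM] at hH
  have hA : ENNReal.ofReal b * ∫⁻ s, (Set.Iic ρ).indicator (fun s => (ENNReal.ofReal s) ^ (-(1/2):ℝ)) |t - s|
      ≤ 4 * ENNReal.ofReal (M ^ (1/2:ℝ) * b ^ (1/3:ℝ)) := by
    refine (mul_le_mul_right hn _).trans ?_
    rw [show (2:ℝ≥0∞) = ENNReal.ofReal 2 by norm_num, show (4:ℝ≥0∞) = ENNReal.ofReal 4 by norm_num, ← ENNReal.ofReal_mul (by norm_num), ← ENNReal.ofReal_mul hb.le, ← ENNReal.ofReal_mul (by norm_num)]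
    apply ENNReal.ofReal_le_ofReal
    rw [hρd, Real.mul_rpow hM.le (by positivity), ← Real.rpow_mul hb.le]
    have : b ^ (1/3:ℝ) = b * b ^ (-(4/3) * (1/2) : ℝ) := by
      nth_rewrite 2 [← Real.rpow_one b]
      rw [← Real.rpow_add hb]; norm_num
    rw [this]; apply le_of_eq; ring
  have hB : ∫⁻ s, (f s : ℝ≥0∞) * (Set.Ioi ρ).indicator (fun s => (ENNReal.ofReal s) ^ (-(1/2):ℝ)) |t - s|
      ≤ 2 * ENNReal.ofReal (M ^ (1/2:ℝ) * b ^ (1/3:ℝ)) := by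
    refine hH.trans ((mul_le_mul_right (ENNReal.rpow_le_rpow hfar (by norm_num)) _).trans ?_)
    rw [show (2:ℝ≥0∞) = ENNReal.ofReal 2 by norm_num, ← ENNReal.ofReal_mul (by norm_num),
      ENNReal.ofReal_rpow_of_pos hM, ENNReal.ofReal_rpow_of_pos (by positivity), ← ENNReal.ofReal_mul (by positivity), ← ENNReal.ofReal_mul (by norm_num)]
    apply ENNReal.ofReal_le_ofReal
    rw [Real.mul_rpow (by norm_num) (by positivity)]
    have h2 : (2:ℝ) ^ (1/4:ℝ) ≤ 2 := by
      calc (2:ℝ) ^ (1/4:ℝ) ≤ 2 ^ (1:ℝ) := Real.rpow_le_rpow_of_exponent_le (by norm_num) (by norm_num)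
        _ = 2 := by norm_num
    have h3 : M ^ (1 / (4/3):ℝ) * ρ⁻¹ ^ (1/4:ℝ) = M ^ (1/2:ℝ) * b ^ (1/3:ℝ) := by
      rw [hρd, mul_inv, Real.mul_rpow (by positivity) (by positivity), ← Real.rpow_neg hb.le, ← Real.rpow_mul hb.le,
        ← Real.rpow_neg_one M, ← Real.rpow_mul hM.le, ← mul_assoc, ← Real.rpow_add hM]
      norm_num
    calc M ^ (1 / (4/3):ℝ) * (2 ^ (1/4:ℝ) * ρ⁻¹ ^ (1/4:ℝ)) = 2 ^ (1/4:ℝ) * (M ^ (1 / (4/3):ℝ) * ρ⁻¹ ^ (1/4:ℝ)) := by ring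
      _ ≤ 2 * (M ^ (1 / (4/3):ℝ) * ρ⁻¹ ^ (1/4:ℝ)) := by gcongr
      _ = _ := by rw [h3]
  refine (add_le_add hA hB).trans ?_
  rw [← add_mul]; norm_num

theorem hls (f : ℝ → NNReal) (hf : Measurable f) :
    ∫⁻ t, ∫⁻ s, (f t : ℝ≥0∞) * f s * hk (t - s) ≤ 12 * (∫⁻ t, (f t:ℝ≥0∞)^(4/3:ℝ))^(3/2:ℝ) := by
  by_cases hT : ∫⁻ t, (f t:ℝ≥0∞)^(4/3:ℝ) = ⊤
  · rw [hT]; norm_num [ENNReal.top_rpow_of_pos]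
  obtain hM | hM := eq_or_ne (∫⁻ t, (f t:ℝ≥0∞)^(4/3:ℝ)) 0
  · have h0 : ∀ᵐ t, (f t : ℝ≥0∞) = 0 := by
      rw [lintegral_eq_zero_iff (by fun_prop)] at hM
      filter_upwards [hM] with t ht
      simpa using ht
    have : ∫⁻ t, ∫⁻ s, (f t : ℝ≥0∞) * f s * hk (t - s) = 0 := by
      rw [← lintegral_zero (μ := (volume : Measure ℝ))]
      apply lintegral_congr_ae
      filter_upwards [h0] with t ht
      simp [ht]
    rw [this]; exact zero_le
  set M : ℝ := (∫⁻ t, (f t:ℝ≥0∞)^(4/3:ℝ)).toReal with hMd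
  have hMp : 0 < M := ENNReal.toReal_pos hM hT
  have hfM : ∫⁻ t, (f t:ℝ≥0∞)^(4/3:ℝ) = ENNReal.ofReal M := (ENNReal.ofReal_toReal hT).symm
  have hkm := hk_meas
  have hset : MeasurableSet {p : ℝ × ℝ | (f p.2 : ℝ) ≤ f p.1} := measurableSet_le (by fun_prop) (by fun_prop)
  -- half form
  set H : ℝ × ℝ → ℝ≥0∞ := {p : ℝ × ℝ | (f p.2 : ℝ) ≤ f p.1}.indicator (fun p => (f p.1 : ℝ≥0∞) * f p.2 * hk (p.1 - p.2)) with hH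
  have hHm : Measurable H := by
    apply Measurable.indicator _ hset
    fun_prop
  have hhalf : ∫⁻ t, ∫⁻ s, H (t, s) ≤ 6 * (ENNReal.ofReal M)^(3/2:ℝ) := by
    have hin : ∀ t, ∫⁻ s, H (t, s) ≤ 6 * ENNReal.ofReal (M^(1/2:ℝ)) * (f t : ℝ≥0∞)^(4/3:ℝ) := by
      intro t
      obtain h0 | h0 := eq_or_ne (f t) 0
      · have : ∀ s, H (t, s) = 0 := by
          intro s; simp [hH, h0, Set.indicator]
        simp [this]
      have hb : 0 < (f t : ℝ) := by positivity
      have := hls_inner f hf M hMp hfM t (f t) hb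
      have e : ∀ s, H (t, s) = (f t : ℝ≥0∞) * {s | (f s : ℝ) ≤ f t}.indicator (fun s => (f s : ℝ≥0∞) * hk (t - s)) s := by
        intro s
        simp only [hH, Set.indicator, Set.mem_ofPred_eq, mul_ite, mul_zero, mul_assoc]
      simp_rw [e]
      rw [lintegral_const_mul _ (Measurable.indicator (by fun_prop) (measurableSet_le (by fun_prop) (by fun_prop)))]
      refine (mul_le_mul_right this _).trans (le_of_eq ?_)
      rw [ENNReal.ofReal_mul (by positivity), ← ENNReal.ofReal_rpow_of_pos hb, ENNReal.ofReal_coe_nnreal]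
      have : (f t : ℝ≥0∞)^(4/3:ℝ) = f t * (f t : ℝ≥0∞)^(1/3:ℝ) := by
        nth_rewrite 2 [← ENNReal.rpow_one (f t : ℝ≥0∞)]
        rw [← ENNReal.rpow_add _ _ (by simpa using h0) (by simp)]; norm_num
      rw [this]; ring
    refine (lintegral_mono hin).trans ?_
    rw [lintegral_const_mul _ (by fun_prop), hfM, mul_assoc]
    refine mul_le_mul_right (le_of_eq ?_) _
    rw [ENNReal.ofReal_rpow_of_pos hMp, ← ENNReal.ofReal_mul (by positivity)]
    congr 1
    nth_rewrite 2 [← Real.rpow_one M]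
    rw [← Real.rpow_add hMp]; norm_num
  have hpt : ∀ t s, (f t : ℝ≥0∞) * f s * hk (t - s) ≤ H (t, s) + H (s, t) := by
    intro t s
    rcases le_total (f s : ℝ) (f t) with h | h
    · refine le_add_right (le_of_eq ?_)
      rw [hH, Set.indicator_of_mem (by exact h)]
    · refine le_add_left (le_of_eq ?_)
      rw [hH, Set.indicator_of_mem (by exact h)]
      simp only [hk, abs_sub_comm]; ring
  calc ∫⁻ t, ∫⁻ s, (f t : ℝ≥0∞) * f s * hk (t - s) ≤ ∫⁻ t, ∫⁻ s, (H (t, s) + H (s, t)) :=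
        lintegral_mono fun t => lintegral_mono fun s => hpt t s
    _ = (∫⁻ t, ∫⁻ s, H (t, s)) + ∫⁻ t, ∫⁻ s, H (s, t) := by
        rw [← lintegral_add_left (hHm.lintegral_prod_right')]
        apply lintegral_congr; intro t
        exact lintegral_add_left (f := fun s => H (t, s)) (hHm.comp (measurable_prodMk_left (x := t))) _
    _ = (∫⁻ t, ∫⁻ s, H (t, s)) + ∫⁻ t, ∫⁻ s, H (t, s) := by
        congr 1
        rw [lintegral_lintegral_swap]
        exact (hHm.comp measurable_swap).aemeasurable
    _ ≤ _ := by
        refine (add_le_add hhalf hhalf).trans (le_of_eq ?_)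
        rw [hfM, ← add_mul]; norm_num


theorem vdc_first (θ θ' θ'' : ℝ → ℝ) (a b δ : ℝ) (hab : a ≤ b) (hδ : 0 < δ)
    (h1 : ∀ s ∈ Set.Icc a b, HasDerivAt θ (θ' s) s)
    (h2 : ∀ s ∈ Set.Icc a b, HasDerivAt θ' (θ'' s) s)
    (hc : ContinuousOn θ'' (Set.Icc a b))
    (hl : ∀ s ∈ Set.Icc a b, 0 ≤ θ'' s) (hd : ∀ s ∈ Set.Icc a b, δ ≤ θ' s) :
    ‖∫ s in a..b, cexp (I * θ s)‖ ≤ 2 / δ := by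
  have hu : Set.uIcc a b = Set.Icc a b := Set.uIcc_of_le hab
  have hpos : ∀ s ∈ Set.Icc a b, 0 < θ' s := fun s hs => hδ.trans_le (hd s hs)
  have cθ : ContinuousOn θ (Set.Icc a b) := fun s hs => (h1 s hs).continuousAt.continuousWithinAt
  have cθ' : ContinuousOn θ' (Set.Icc a b) := fun s hs => (h2 s hs).continuousAt.continuousWithinAt
  set w : ℝ → ℝ := fun s => (θ' s)⁻¹ with hw
  set w' : ℝ → ℝ := fun s => -θ'' s / (θ' s)^2 with hw'
  have dw : ∀ s ∈ Set.Icc a b, HasDerivAt w (w' s) s := fun s hs => (h2 s hs).inv (hpos s hs).ne'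
  have cw' : ContinuousOn w' (Set.Icc a b) := by
    apply ContinuousOn.div hc.neg (cθ'.pow 2)
    intro s hs; exact pow_ne_zero 2 (hpos s hs).ne'
  have cF : ContinuousOn (fun s => cexp (I * θ s)) (Set.Icc a b) := by
    apply Continuous.comp_continuousOn (by fun_prop : Continuous fun x : ℝ => cexp (I * x)) cθ
  have cF' : ContinuousOn (fun s => cexp (I * θ s) * (I * θ' s)) (Set.Icc a b) :=
    cF.mul (continuousOn_const.mul (Complex.continuous_ofReal.comp_continuousOn cθ'))
  have dF : ∀ s ∈ Set.Icc a b, HasDerivAt (fun s => cexp (I * θ s)) (cexp (I * θ s) * (I * θ' s)) s := by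
    intro s hs
    exact ((h1 s hs).ofReal_comp.const_mul I).cexp
  have dW : ∀ s ∈ Set.Icc a b, HasDerivAt (fun s => -I * (w s : ℂ)) (-I * (w' s : ℂ)) s := by
    intro s hs
    exact (dw s hs).ofReal_comp.const_mul (-I)
  have cW' : ContinuousOn (fun s => -I * (w' s : ℂ)) (Set.Icc a b) :=
    continuousOn_const.mul (Complex.continuous_ofReal.comp_continuousOn cw')
  have ibp := intervalIntegral.integral_mul_deriv_eq_deriv_mul (a := a) (b := b)
    (u := fun s => -I * (w s : ℂ)) (v := fun s => cexp (I * θ s)) (by rwa [hu]) (by rwa [hu])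
    (ContinuousOn.intervalIntegrable (by rwa [hu])) (ContinuousOn.intervalIntegrable (by rwa [hu]))
  have e1 : ∫ s in a..b, cexp (I * θ s) = ∫ s in a..b, -I * (w s : ℂ) * (cexp (I * θ s) * (I * θ' s)) := by
    apply intervalIntegral.integral_congr
    intro s hs
    rw [hu] at hs
    have : (θ' s : ℂ) ≠ 0 := by exact_mod_cast (hpos s hs).ne'
    simp only [hw]
    push_cast
    field_simp
    rw [I_sq]; ring
  rw [e1, ibp]
  have nE : ∀ s : ℝ, ‖cexp (I * θ s)‖ = 1 := fun s => by rw [mul_comm]; exact Complex.norm_exp_ofReal_mul_I _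
  have wnn : ∀ s ∈ Set.Icc a b, 0 ≤ w s := fun s hs => inv_nonneg.2 (hpos s hs).le
  have n1 : ‖∫ s in a..b, -I * (w' s : ℂ) * cexp (I * θ s)‖ ≤ w a - w b := by
    calc _ ≤ ∫ s in a..b, -w' s := by
          apply intervalIntegral.norm_integral_le_of_norm_le hab
          · refine Eventually.of_forall fun s hs => ?_
            have hs' := Set.Ioc_subset_Icc_self hs
            rw [norm_mul, norm_mul, nE, norm_neg, norm_I, one_mul, mul_one, Complex.norm_real, Real.norm_eq_abs, abs_of_nonpos]
            simp only [hw']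
            have := hl s hs'
            have := hpos s hs'
            apply div_nonpos_of_nonpos_of_nonneg <;> [linarith; positivity]
          · exact (ContinuousOn.intervalIntegrable (by rw [hu]; exact cw'.neg))
      _ = w a - w b := by
          rw [intervalIntegral.integral_neg, intervalIntegral.integral_eq_sub_of_hasDerivAt (by rwa [hu])
            (ContinuousOn.intervalIntegrable (by rwa [hu]))]
          ring
  have ha : a ∈ Set.Icc a b := ⟨le_rfl, hab⟩
  have hb : b ∈ Set.Icc a b := ⟨hab, le_rfl⟩
  have nW : ∀ s ∈ Set.Icc a b, ‖-I * (w s : ℂ) * cexp (I * θ s)‖ = w s := by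
    intro s hs
    rw [norm_mul, norm_mul, nE, norm_neg, norm_I, one_mul, mul_one, Complex.norm_real, Real.norm_eq_abs, abs_of_nonneg (wnn s hs)]
  have hwa : w a ≤ 1 / δ := by
    simp only [hw, one_div]
    exact inv_anti₀ hδ (hd a ha)
  calc _ ≤ ‖-I * (w b : ℂ) * cexp (I * θ b)‖ + ‖-I * (w a : ℂ) * cexp (I * θ a)‖ + ‖∫ s in a..b, -I * (w' s : ℂ) * cexp (I * θ s)‖ :=
        (norm_sub_le _ _).trans (add_le_add_left (norm_sub_le _ _) _)
    _ ≤ w b + w a + (w a - w b) := by rw [nW a ha, nW b hb]; gcongr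
    _ ≤ 2 / δ := by rw [show 2 / δ = 2 * (1/δ) by ring]; linarith

theorem vdc_half (θ θ' θ'' : ℝ → ℝ) (a b l : ℝ) (hab : a ≤ b) (hl0 : 0 < l)
    (h1 : ∀ s ∈ Set.Icc a b, HasDerivAt θ (θ' s) s)
    (h2 : ∀ s ∈ Set.Icc a b, HasDerivAt θ' (θ'' s) s)
    (hc : ContinuousOn θ'' (Set.Icc a b))
    (hl : ∀ s ∈ Set.Icc a b, l ≤ θ'' s) (hd : 0 ≤ θ' a) :
    ‖∫ s in a..b, cexp (I * θ s)‖ ≤ 3 / √l := by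
  have hsl : 0 < √l := Real.sqrt_pos.2 hl0
  have nE : ∀ s : ℝ, ‖cexp (I * θ s)‖ = 1 := fun s => by rw [mul_comm]; exact Complex.norm_exp_ofReal_mul_I _
  have cθ : ContinuousOn θ (Set.Icc a b) := fun s hs => (h1 s hs).continuousAt.continuousWithinAt
  have cF : ContinuousOn (fun s => cexp (I * θ s)) (Set.Icc a b) := by
    apply Continuous.comp_continuousOn (by fun_prop : Continuous fun x : ℝ => cexp (I * x)) cθ
  have gr : ∀ s ∈ Set.Icc a b, l * (s - a) ≤ θ' s := by
    intro s hs
    have := (convex_Icc a b).mul_sub_le_image_sub_of_le_deriv (f := θ') (C := l)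
      (fun s hs => (h2 s hs).continuousAt.continuousWithinAt)
      (fun s hs => (h2 s (interior_subset hs)).differentiableAt.differentiableWithinAt)
      (fun s hs => by rw [(h2 s (interior_subset hs)).deriv]; exact hl s (interior_subset hs))
      a ⟨le_rfl, hab⟩ s hs hs.1
    linarith
  by_cases hlen : b - a ≤ 1 / √l
  · calc _ ≤ 1 * |b - a| := intervalIntegral.norm_integral_le_of_norm_le_const (fun s _ => (nE s).le)
      _ ≤ 3 / √l := by
        rw [one_mul, abs_of_nonneg (by linarith)]
        refine hlen.trans ?_
        gcongr; norm_num
  push Not at hlen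
  set d := a + 1 / √l with hdd
  have had : a ≤ d := by have : 0 ≤ 1 / √l := by positivity
                         linarith
  have hdb : d ≤ b := by linarith
  have sub : Set.Icc d b ⊆ Set.Icc a b := Set.Icc_subset_Icc_left had
  rw [← intervalIntegral.integral_add_adjacent_intervals (b := d)
    (ContinuousOn.intervalIntegrable (by rw [Set.uIcc_of_le had]; exact cF.mono (Set.Icc_subset_Icc_right hdb)))
    (ContinuousOn.intervalIntegrable (by rw [Set.uIcc_of_le hdb]; exact cF.mono sub))]
  have p1 : ‖∫ s in a..d, cexp (I * θ s)‖ ≤ 1 / √l := by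
    calc _ ≤ 1 * |d - a| := intervalIntegral.norm_integral_le_of_norm_le_const (fun s _ => (nE s).le)
      _ = 1 / √l := by rw [one_mul, abs_of_nonneg (by linarith)]; ring
  have p2 := vdc_first θ θ' θ'' d b (√l) hdb hsl (fun s hs => h1 s (sub hs)) (fun s hs => h2 s (sub hs))
    (hc.mono sub) (fun s hs => hl0.le.trans (hl s (sub hs))) (fun s hs => by
      refine le_trans ?_ (gr s (sub hs))
      have : 1 / √l ≤ s - a := by linarith [hs.1]
      calc √l = l * (1 / √l) := by
            field_simp; exact Real.sq_sqrt hl0.le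
        _ ≤ _ := by gcongr)
  calc _ ≤ _ := norm_add_le _ _
    _ ≤ 1 / √l + 2 / √l := add_le_add p1 p2
    _ = 3 / √l := by ring

theorem vdc_pos (θ θ' θ'' : ℝ → ℝ) (a b l : ℝ) (hab : a ≤ b) (hl0 : 0 < l)
    (h1 : ∀ s ∈ Set.Icc a b, HasDerivAt θ (θ' s) s)
    (h2 : ∀ s ∈ Set.Icc a b, HasDerivAt θ' (θ'' s) s)
    (hc : ContinuousOn θ'' (Set.Icc a b))
    (hl : ∀ s ∈ Set.Icc a b, l ≤ θ'' s) :
    ‖∫ s in a..b, cexp (I * θ s)‖ ≤ 6 / √l := by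
  have cθ : ContinuousOn θ (Set.Icc a b) := fun s hs => (h1 s hs).continuousAt.continuousWithinAt
  have cθ' : ContinuousOn θ' (Set.Icc a b) := fun s hs => (h2 s hs).continuousAt.continuousWithinAt
  have cF : ContinuousOn (fun s => cexp (I * θ s)) (Set.Icc a b) := by
    apply Continuous.comp_continuousOn (by fun_prop : Continuous fun x : ℝ => cexp (I * x)) cθ
  have hsl : 0 < √l := Real.sqrt_pos.2 hl0
  -- reflected half
  have refl : ∀ c ∈ Set.Icc a b, θ' c ≤ 0 → ‖∫ s in a..c, cexp (I * θ s)‖ ≤ 3 / √l := by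
    intro c hcab hneg
    have mem : ∀ s ∈ Set.Icc (-c) (-a), -s ∈ Set.Icc a b := fun s hs =>
      ⟨by linarith [hs.2], by linarith [hs.1, hcab.2]⟩
    have := vdc_half (fun s => θ (-s)) (fun s => - θ' (-s)) (fun s => θ'' (-s)) (-c) (-a) l
      (by linarith [hcab.1]) hl0
      (fun s hs => by
        have := (h1 (-s) (mem s hs)).comp s (hasDerivAt_neg s)
        rw [mul_neg_one] at this
        exact this)
      (fun s hs => by
        have := ((h2 (-s) (mem s hs)).comp s (hasDerivAt_neg s)).neg
        rw [mul_neg_one, neg_neg] at this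
        exact this)
      (hc.comp continuous_neg.continuousOn mem)
      (fun s hs => hl _ (mem s hs)) (by simpa using hneg)
    rw [intervalIntegral.integral_comp_neg (fun s => cexp (I * θ s))] at this
    simpa using this
  have fwd : ∀ c ∈ Set.Icc a b, 0 ≤ θ' c → ‖∫ s in c..b, cexp (I * θ s)‖ ≤ 3 / √l := by
    intro c hcab hp
    have sub : Set.Icc c b ⊆ Set.Icc a b := Set.Icc_subset_Icc_left hcab.1
    exact vdc_half θ θ' θ'' c b l hcab.2 hl0 (fun s hs => h1 s (sub hs)) (fun s hs => h2 s (sub hs))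
      (hc.mono sub) (fun s hs => hl s (sub hs)) hp
  have h36 : 3 / √l ≤ 6 / √l := by gcongr; norm_num
  have ha : a ∈ Set.Icc a b := ⟨le_rfl, hab⟩
  have hb : b ∈ Set.Icc a b := ⟨hab, le_rfl⟩
  rcases le_total 0 (θ' a) with h | h
  · exact (fwd a ha h).trans h36
  rcases le_total (θ' b) 0 with h' | h'
  · exact (refl b hb h').trans h36
  obtain ⟨c, hcm, hc0⟩ := intermediate_value_Icc hab cθ' ⟨h, h'⟩
  rw [← intervalIntegral.integral_add_adjacent_intervals (b := c)
    (ContinuousOn.intervalIntegrable (by rw [Set.uIcc_of_le hcm.1]; exact cF.mono (Set.Icc_subset_Icc_right hcm.2)))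
    (ContinuousOn.intervalIntegrable (by rw [Set.uIcc_of_le hcm.2]; exact cF.mono (Set.Icc_subset_Icc_left hcm.1)))]
  calc _ ≤ _ := norm_add_le _ _
    _ ≤ 3 / √l + 3 / √l := add_le_add (refl c hcm hc0.le) (fwd c hcm hc0.ge)
    _ = 6 / √l := by ring

theorem vdc (θ θ' θ'' : ℝ → ℝ) (a b l : ℝ) (hab : a ≤ b) (hl0 : 0 < l)
    (h1 : ∀ s ∈ Set.Icc a b, HasDerivAt θ (θ' s) s)
    (h2 : ∀ s ∈ Set.Icc a b, HasDerivAt θ' (θ'' s) s)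
    (hc : ContinuousOn θ'' (Set.Icc a b))
    (hl : (∀ s ∈ Set.Icc a b, l ≤ θ'' s) ∨ (∀ s ∈ Set.Icc a b, θ'' s ≤ -l)) :
    ‖∫ s in a..b, cexp (I * θ s)‖ ≤ 6 / √l := by
  rcases hl with hl | hl
  · exact vdc_pos θ θ' θ'' a b l hab hl0 h1 h2 hc hl
  have := vdc_pos (fun s => -θ s) (fun s => -θ' s) (fun s => -θ'' s) a b l hab hl0
    (fun s hs => (h1 s hs).neg) (fun s hs => (h2 s hs).neg) hc.neg (fun s hs => by linarith [hl s hs])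
  rw [← Complex.norm_conj] at this
  convert this using 2
  rw [intervalIntegral.integral_of_le hab, intervalIntegral.integral_of_le hab, ← integral_conj]
  congr 1; ext s
  rw [← Complex.exp_conj]; simp


theorem sqrtq_d1 (a b c s : ℝ) (h : 0 < a + 2 * b * s + c * s ^ 2) :
    HasDerivAt (fun s => √(a + 2 * b * s + c * s ^ 2)) ((b + c * s) / √(a + 2 * b * s + c * s ^ 2)) s := by
  have h1 : HasDerivAt (fun s => a + 2 * b * s + c * s ^ 2) (2 * b + c * (2 * s)) s := by
    have := (((hasDerivAt_id s).const_mul (2 * b)).const_add a).add (((hasDerivAt_id s).pow 2).const_mul c)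
    refine this.congr_deriv ?_
    simp
  refine (h1.sqrt h.ne').congr_deriv ?_
  have : 0 < √(a + 2 * b * s + c * s ^ 2) := Real.sqrt_pos.2 h
  field_simp

theorem sqrtq_d2 (a b c s : ℝ) (h : 0 < a + 2 * b * s + c * s ^ 2) :
    HasDerivAt (fun s => (b + c * s) / √(a + 2 * b * s + c * s ^ 2))
      ((c * (a + 2 * b * s + c * s ^ 2) - (b + c * s) ^ 2) /
        ((a + 2 * b * s + c * s ^ 2) * √(a + 2 * b * s + c * s ^ 2))) s := by
  have hs : 0 < √(a + 2 * b * s + c * s ^ 2) := Real.sqrt_pos.2 h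
  have h1 : HasDerivAt (fun s => b + c * s) c s := by
    simpa using ((hasDerivAt_id s).const_mul c).const_add b
  refine (h1.div (sqrtq_d1 a b c s h) hs.ne').congr_deriv ?_
  have e : √(a + 2 * b * s + c * s ^ 2) ^ 2 = a + 2 * b * s + c * s ^ 2 := Real.sq_sqrt h.le
  set q := √(a + 2 * b * s + c * s ^ 2)
  rw [← e]
  field_simp

/-- the second derivative of the square root of a quadratic -/
def sq2 (P c d : ℝ) : ℝ := (c * P - d ^ 2) / (P * √P)

theorem sq2_nonneg_add {x y m ε2 : ℝ} (hε : ε2 = 1 ∨ ε2 = -1) (hx : 0 ≤ x) (hy : 0 ≤ y) :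
    (2 * m ≤ y - x → (ε2 = 1 → m ≤ 1/2 * (x + ε2 * y)) ∧ (ε2 = -1 → 1/2 * (x + ε2 * y) ≤ -m)) ∧
    (2 * m ≤ x - y → m ≤ 1/2 * (x + ε2 * y)) := by
  rcases hε with rfl | rfl <;> norm_num <;> intros <;> (try constructor) <;> intros <;> linarith

theorem line_vdc (ap bp am bm c κ ν τ m ε2 A B : ℝ) (hAB : A ≤ B) (hτ : τ ≠ 0) (hm : 0 < m) (hε : ε2 = 1 ∨ ε2 = -1)
    (hp : ∀ s ∈ Set.Icc A B, 0 < ap + 2 * bp * s + c * s ^ 2)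
    (hq : ∀ s ∈ Set.Icc A B, 0 < am + 2 * bm * s + c * s ^ 2)
    (hp2 : ∀ s ∈ Set.Icc A B, 0 ≤ sq2 (ap + 2 * bp * s + c * s ^ 2) c (bp + c * s))
    (hq2 : ∀ s ∈ Set.Icc A B, 0 ≤ sq2 (am + 2 * bm * s + c * s ^ 2) c (bm + c * s))
    (hd : (∀ s ∈ Set.Icc A B, 2 * m ≤ sq2 (am + 2 * bm * s + c * s ^ 2) c (bm + c * s) - sq2 (ap + 2 * bp * s + c * s ^ 2) c (bp + c * s)) ∨
      (∀ s ∈ Set.Icc A B, 2 * m ≤ sq2 (ap + 2 * bp * s + c * s ^ 2) c (bp + c * s) - sq2 (am + 2 * bm * s + c * s ^ 2) c (bm + c * s))) :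
    ‖∫ s in A..B, cexp (I * ((τ * (1/2 * (√(ap + 2 * bp * s + c * s ^ 2) + ε2 * √(am + 2 * bm * s + c * s ^ 2))) + (κ + ν * s) : ℝ) : ℂ))‖
      ≤ 6 / √(|τ| * m) := by
  have cont : ∀ a b : ℝ, (∀ s ∈ Set.Icc A B, 0 < a + 2 * b * s + c * s ^ 2) →
      ContinuousOn (fun s => sq2 (a + 2 * b * s + c * s ^ 2) c (b + c * s)) (Set.Icc A B) := by
    intro a b h
    unfold sq2
    apply ContinuousOn.div (by fun_prop) (by fun_prop)
    intro s hs
    have := h s hs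
    have : 0 < √(a + 2 * b * s + c * s ^ 2) := Real.sqrt_pos.2 this
    exact (mul_pos (h s hs) this).ne'
  apply vdc _ (fun s => τ * (1/2 * ((bp + c * s) / √(ap + 2 * bp * s + c * s ^ 2) + ε2 * ((bm + c * s) / √(am + 2 * bm * s + c * s ^ 2)))) + ν)
    (fun s => τ * (1/2 * (sq2 (ap + 2 * bp * s + c * s ^ 2) c (bp + c * s) + ε2 * sq2 (am + 2 * bm * s + c * s ^ 2) c (bm + c * s))))
    A B (|τ| * m) hAB (by positivity)
  · intro s hs
    refine HasDerivAt.add ?_ ?_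
    · exact (((sqrtq_d1 ap bp c s (hp s hs)).add ((sqrtq_d1 am bm c s (hq s hs)).const_mul ε2)).const_mul (1/2)).const_mul τ
    · simpa using ((hasDerivAt_id s).const_mul ν).const_add κ
  · intro s hs
    exact ((((sqrtq_d2 ap bp c s (hp s hs)).add ((sqrtq_d2 am bm c s (hq s hs)).const_mul ε2)).const_mul (1/2)).const_mul τ).add_const ν
  · exact ContinuousOn.mul continuousOn_const (continuousOn_const.mul ((cont _ _ hp).add (continuousOn_const.mul (cont _ _ hq))))
  · have key : (∀ s ∈ Set.Icc A B, m ≤ 1/2 * (sq2 (ap + 2 * bp * s + c * s ^ 2) c (bp + c * s) + ε2 * sq2 (am + 2 * bm * s + c * s ^ 2) c (bm + c * s))) ∨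
        (∀ s ∈ Set.Icc A B, 1/2 * (sq2 (ap + 2 * bp * s + c * s ^ 2) c (bp + c * s) + ε2 * sq2 (am + 2 * bm * s + c * s ^ 2) c (bm + c * s)) ≤ -m) := by
      rcases hd with hd | hd
      · rcases hε with h | h
        · left; intro s hs
          exact ((sq2_nonneg_add (Or.inl h) (hp2 s hs) (hq2 s hs)).1 (hd s hs)).1 h
        · right; intro s hs
          exact ((sq2_nonneg_add (Or.inr h) (hp2 s hs) (hq2 s hs)).1 (hd s hs)).2 h
      · left; intro s hs
        exact (sq2_nonneg_add hε (hp2 s hs) (hq2 s hs)).2 (hd s hs)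
    rcases lt_or_gt_of_ne hτ with h | h
    · rw [abs_of_neg h]
      rcases key with k | k
      · right; intro s hs; have := k s hs; nlinarith
      · left; intro s hs; have := k s hs; nlinarith
    · rw [abs_of_pos h]
      rcases key with k | k
      · left; intro s hs; have := k s hs; nlinarith
      · right; intro s hs; have := k s hs; nlinarith

/-- the real phase -/
def phs (γ ε2 : ℝ) (ξ : E3) : ℝ :=
  1/2 * (√(1 + γ ^ 2 * ‖ξ‖ ^ 2 + 2 * γ * ξ 2) + ε2 * √(1 + γ ^ 2 * ‖ξ‖ ^ 2 - 2 * γ * ξ 2))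

/-- quadratic under the root -/
def Pq (γ σ : ℝ) (ξ : E3) : ℝ := 1 + γ ^ 2 * ‖ξ‖ ^ 2 + 2 * σ * γ * ξ 2

def Hq (γ σ : ℝ) (v ξ : E3) : ℝ := sq2 (Pq γ σ ξ) (γ ^ 2 * ‖v‖ ^ 2) (γ ^ 2 * inner ℝ ξ v + σ * γ * v 2)

theorem Pq_eq (γ σ : ℝ) (hσ : σ ^ 2 = 1) (ξ : E3) : Pq γ σ ξ = γ ^ 2 * (ξ 0 ^ 2 + ξ 1 ^ 2) + (γ * ξ 2 + σ) ^ 2 := by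
  unfold Pq
  rw [EuclideanSpace.norm_sq_eq, Fin.sum_univ_three]
  simp only [Real.norm_eq_abs, sq_abs]
  linear_combination -hσ

theorem Pq_nonneg (γ σ : ℝ) (hσ : σ ^ 2 = 1) (ξ : E3) : 0 ≤ Pq γ σ ξ := by
  rw [Pq_eq γ σ hσ]; positivity

theorem Hq_nonneg (γ σ : ℝ) (hσ : σ ^ 2 = 1) (v ξ : E3) : 0 ≤ Hq γ σ v ξ := by
  unfold Hq sq2
  apply div_nonneg _ (mul_nonneg (Pq_nonneg γ σ hσ ξ) (Real.sqrt_nonneg _))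
  rw [Pq_eq γ σ hσ, EuclideanSpace.norm_sq_eq, Fin.sum_univ_three, PiLp.inner_apply, Fin.sum_univ_three]
  simp only [Real.norm_eq_abs, sq_abs, RCLike.inner_apply, conj_trivial]
  have : γ ^ 2 * (v 0 ^ 2 + v 1 ^ 2 + v 2 ^ 2) * (γ ^ 2 * (ξ 0 ^ 2 + ξ 1 ^ 2) + (γ * ξ 2 + σ) ^ 2) -
      (γ ^ 2 * (v 0 * ξ 0 + v 1 * ξ 1 + v 2 * ξ 2) + σ * γ * v 2) ^ 2 =
      γ ^ 2 * ((γ * (v 0 * ξ 1 - v 1 * ξ 0)) ^ 2 + (v 0 * (γ * ξ 2 + σ) - γ * v 2 * ξ 0) ^ 2 + (v 1 * (γ * ξ 2 + σ) - γ * v 2 * ξ 1) ^ 2) := by ring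
  rw [this]; positivity

theorem Pq_line (γ σ s : ℝ) (v ξ : E3) :
    Pq γ σ (ξ + s • v) = Pq γ σ ξ + 2 * (γ ^ 2 * inner ℝ ξ v + σ * γ * v 2) * s + (γ ^ 2 * ‖v‖ ^ 2) * s ^ 2 := by
  unfold Pq
  rw [norm_add_sq_real, inner_smul_right, norm_smul, mul_pow, Real.norm_eq_abs, sq_abs]
  simp
  ring

theorem Hq_line (γ σ s : ℝ) (v ξ : E3) :
    Hq γ σ v (ξ + s • v) = sq2 (Pq γ σ ξ + 2 * (γ ^ 2 * inner ℝ ξ v + σ * γ * v 2) * s + (γ ^ 2 * ‖v‖ ^ 2) * s ^ 2)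
      (γ ^ 2 * ‖v‖ ^ 2) ((γ ^ 2 * inner ℝ ξ v + σ * γ * v 2) + (γ ^ 2 * ‖v‖ ^ 2) * s) := by
  unfold Hq
  rw [Pq_line]
  congr 1
  rw [inner_add_left, inner_smul_left, real_inner_self_eq_norm_sq]
  simp
  ring

/-- the oscillating factor -/
def osc (γ ε2 τ : ℝ) (x ξ : E3) : ℂ := cexp (I * ((τ * phs γ ε2 ξ + 2 * π * inner ℝ ξ x : ℝ) : ℂ))

theorem osc_norm (γ ε2 τ : ℝ) (x ξ : E3) : ‖osc γ ε2 τ x ξ‖ = 1 := by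
  unfold osc; rw [mul_comm]; exact Complex.norm_exp_ofReal_mul_I _

theorem phs_cont (γ ε2 : ℝ) : Continuous (phs γ ε2) := by
  unfold phs; fun_prop

theorem osc_cont (γ ε2 : ℝ) : Continuous (fun p : ℝ × E3 × E3 => osc γ ε2 p.1 p.2.1 p.2.2) := by
  unfold osc
  have := phs_cont γ ε2
  fun_prop

theorem line_bound (γ ε2 τ m L : ℝ) (hγ : 0 < γ) (hε : ε2 = 1 ∨ ε2 = -1) (hτ : τ ≠ 0) (hm : 0 < m) (S : Set E3) (hS : IsClosed S)
    (v ξ x : E3) (hJ : Set.OrdConnected {s : ℝ | ξ + s • v ∈ S})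
    (hpos : ∀ η ∈ S, 0 < Pq γ 1 η ∧ 0 < Pq γ (-1) η)
    (hH : (∀ s : ℝ, ξ + s • v ∈ S → 2 * m ≤ Hq γ (-1) v (ξ + s • v) - Hq γ 1 v (ξ + s • v)) ∨
      (∀ s : ℝ, ξ + s • v ∈ S → 2 * m ≤ Hq γ 1 v (ξ + s • v) - Hq γ (-1) v (ξ + s • v))) :
    ‖∫ s in Set.Icc 0 L, S.indicator (osc γ ε2 τ x) (ξ + s • v)‖ ≤ 6 / √(|τ| * m) := by
  set J : Set ℝ := {s : ℝ | ξ + s • v ∈ S} with hJd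
  have hJc : IsClosed J := hS.preimage (by fun_prop)
  have e1 : ∀ s : ℝ, S.indicator (osc γ ε2 τ x) (ξ + s • v) = J.indicator (fun s => osc γ ε2 τ x (ξ + s • v)) s := by
    intro s
    by_cases h : ξ + s • v ∈ S
    · rw [Set.indicator_of_mem h, Set.indicator_of_mem (show s ∈ J from h)]
    · rw [Set.indicator_of_notMem h, Set.indicator_of_notMem (show s ∉ J from h)]
  simp_rw [e1]
  rw [setIntegral_indicator hJc.measurableSet]
  set K := Set.Icc 0 L ∩ J with hK
  have hKc : IsCompact K := isCompact_Icc.inter_right hJc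
  rcases Set.eq_empty_or_nonempty K with hemp | hne
  · rw [hemp]; simp; positivity
  have hKo : K.OrdConnected := Set.ordConnected_Icc.inter hJ
  have hKI := eq_Icc_of_connected_compact ⟨hne, hKo.isPreconnected⟩ hKc
  have hAB : sInf K ≤ sSup K := by
    obtain ⟨y, hy⟩ := hne
    rw [hKI] at hy
    exact hy.1.trans hy.2
  have hmem : ∀ s ∈ Set.Icc (sInf K) (sSup K), ξ + s • v ∈ S := by
    intro s hs; rw [← hKI] at hs; exact hs.2
  rw [hKI, integral_Icc_eq_integral_Ioc, ← intervalIntegral.integral_of_le hAB]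
  have main := line_vdc (Pq γ 1 ξ) (γ ^ 2 * inner ℝ ξ v + 1 * γ * v 2) (Pq γ (-1) ξ) (γ ^ 2 * inner ℝ ξ v + (-1) * γ * v 2)
    (γ ^ 2 * ‖v‖ ^ 2) (2 * π * inner ℝ ξ x) (2 * π * inner ℝ v x) τ m ε2 (sInf K) (sSup K) hAB hτ hm hε
    (fun s hs => by rw [← Pq_line]; exact (hpos _ (hmem s hs)).1)
    (fun s hs => by rw [← Pq_line]; exact (hpos _ (hmem s hs)).2)
    (fun s hs => by rw [← Hq_line]; exact Hq_nonneg _ _ (by norm_num) _ _)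
    (fun s hs => by rw [← Hq_line]; exact Hq_nonneg _ _ (by norm_num) _ _)
    (by
      rcases hH with hH | hH
      · left; intro s hs
        rw [← Hq_line, ← Hq_line]; exact hH s (hmem s hs)
      · right; intro s hs
        rw [← Hq_line, ← Hq_line]; exact hH s (hmem s hs))
  convert main using 3
  ext s
  rw [← Pq_line, ← Pq_line]
  unfold osc phs Pq
  congr 4
  · ring_nf
  · rw [inner_add_left, inner_smul_left]; simp; ring


theorem avg_line (F : E3 → ℂ) (hF : Measurable F) (hi : Integrable F) (v : E3) (L : ℝ) (hL : 0 < L) :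
    ENNReal.ofReal L * ‖∫ ξ, F ξ‖ₑ ≤ ∫⁻ ξ, ‖∫ s in Set.Icc 0 L, F (ξ + s • v)‖ₑ := by
  have hIntg : Integrable (Function.uncurry fun (ξ : E3) (s : ℝ) => F (ξ + s • v)) (volume.prod (volume.restrict (Set.Icc 0 L))) := by
    rw [integrable_prod_iff']
    · constructor
      · exact Eventually.of_forall fun y => hi.comp_add_right (y • v)
      · simp only [Function.uncurry]
        have : ∀ y : ℝ, ∫ x, ‖F (x + y • v)‖ = ∫ x, ‖F x‖ := fun y => integral_add_right_eq_self (fun x => ‖F x‖) (y • v)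
        simp_rw [this]
        exact integrable_const _
    · apply Measurable.aestronglyMeasurable
      exact hF.comp (by fun_prop)
  have h1 : ∫ ξ, ∫ s in Set.Icc 0 L, F (ξ + s • v) = L • ∫ ξ, F ξ := by
    rw [integral_integral_swap hIntg]
    have : ∀ y : ℝ, ∫ x, F (x + y • v) = ∫ x, F x := fun y => integral_add_right_eq_self (fun x => F x) (y • v)
    simp_rw [this]
    simp [hL.le]
  have h2 : ENNReal.ofReal L * ‖∫ ξ, F ξ‖ₑ = ‖∫ ξ, ∫ s in Set.Icc 0 L, F (ξ + s • v)‖ₑ := by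
    rw [h1, enorm_smul, Real.enorm_eq_ofReal hL.le]
  rw [h2]
  exact enorm_integral_le_lintegral_enorm _

theorem kernel_piece (γ ε2 τ R : ℝ) (hR : 1 ≤ R) (x v : E3) (hv : ‖v‖ ≤ 2) (S : Set E3) (hS : IsClosed S)
    (hSR : S ⊆ Metric.closedBall 0 (6 * R)) (w : E3 → ℝ≥0∞)
    (hw : ∀ ξ, ‖∫ s in Set.Icc 0 R, S.indicator (osc γ ε2 τ x) (ξ + s • v)‖ₑ ≤ w ξ) :
    ENNReal.ofReal R * ‖∫ ξ in S, osc γ ε2 τ x ξ‖ₑ ≤ ∫⁻ ξ in Metric.closedBall 0 (8 * R), w ξ := by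
  have hcont : Continuous (osc γ ε2 τ x) := by
    have := osc_cont γ ε2
    exact this.comp (by fun_prop : Continuous fun ξ : E3 => (τ, x, ξ))
  have hSc : IsCompact S := (isCompact_closedBall (0:E3) (6 * R)).of_isClosed_subset hS hSR
  have hi : Integrable (S.indicator (osc γ ε2 τ x)) :=
    (integrable_indicator_iff hS.measurableSet).2 (hcont.continuousOn.integrableOn_compact hSc)
  rw [← integral_indicator hS.measurableSet]
  refine (avg_line _ (hcont.measurable.indicator hS.measurableSet) hi v R (by linarith)).trans ?_
  rw [← lintegral_indicator Metric.isClosed_closedBall.measurableSet]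
  apply lintegral_mono
  intro ξ
  by_cases h : ξ ∈ Metric.closedBall (0:E3) (8 * R)
  · rw [Set.indicator_of_mem h]; exact hw ξ
  · rw [Set.indicator_of_notMem h]
    have : ∫ s in Set.Icc 0 R, S.indicator (osc γ ε2 τ x) (ξ + s • v) = 0 := by
      apply setIntegral_eq_zero_of_forall_eq_zero
      intro s hs
      apply Set.indicator_of_notMem
      intro hm
      apply h
      have h6 := hSR hm
      rw [mem_closedBall_zero_iff] at h6 ⊢
      have h7 : ‖s • v‖ ≤ R * 2 := by
        rw [norm_smul, Real.norm_eq_abs, abs_of_nonneg hs.1]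
        exact mul_le_mul hs.2 hv (norm_nonneg _) (by linarith)
      have h8 : ‖ξ‖ ≤ ‖ξ + s • v‖ + ‖s • v‖ := by
        simpa using norm_sub_le (ξ + s • v) (s • v)
      linarith
    simp [this]

theorem hk_eq (τ : ℝ) (hτ : τ ≠ 0) : hk τ = ENNReal.ofReal (1 / √|τ|) := by
  unfold hk
  have h : 0 < |τ| := abs_pos.2 hτ
  rw [ENNReal.ofReal_rpow_of_pos h, Real.rpow_neg h.le, ← Real.sqrt_eq_rpow, one_div]



def gA (A : ℝ) (x : ℝ) : ℝ := (Set.Iic A).indicator (fun y => y ^ (-(1/2) : ℝ)) |x|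

theorem gA_nonneg (A y : ℝ) : 0 ≤ gA A y :=
  Set.indicator_apply_nonneg (f := fun y : ℝ => y ^ (-(1/2) : ℝ)) (fun _ => Real.rpow_nonneg (abs_nonneg _) _)

theorem gA_int (A : ℝ) (hA : 0 < A) : ∫ x, gA A x = 4 * √A := by
  unfold gA
  rw [integral_comp_abs (f := (Set.Iic A).indicator (fun y => y ^ (-(1/2) : ℝ)))]
  rw [setIntegral_indicator measurableSet_Iic, Set.Ioi_inter_Iic, ← intervalIntegral.integral_of_le hA.le,
    integral_rpow (by left; norm_num), Real.sqrt_eq_rpow]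
  norm_num
  ring

theorem gA_integrable (A : ℝ) (hA : 0 < A) : Integrable (gA A) := by
  by_contra h
  have h1 := gA_int A hA
  rw [integral_undef h] at h1
  have := Real.sqrt_pos.2 hA
  linarith

theorem inv_xih_int (A : ℝ) (hA : 0 < A) :
    ∫⁻ ξ in Metric.closedBall (0:E3) A, ENNReal.ofReal (1 / xih ξ) ≤ ENNReal.ofReal (32 * A ^ 2) := by
  set F : Fin 3 → ℝ → ℝ := ![gA A, gA A, (Set.Icc (-A) A).indicator (fun _ => 1)] with hF
  have hFi : ∀ i, Integrable (F i) := by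
    intro i
    fin_cases i
    · exact gA_integrable A hA
    · exact gA_integrable A hA
    · exact (integrable_indicator_iff measurableSet_Icc).2 (by simp)
  have hIntg : Integrable (fun x : Fin 3 → ℝ => ∏ i, F i (x i)) := Integrable.fintype_prod hFi
  have hval : ∫ x : Fin 3 → ℝ, ∏ i, F i (x i) = 32 * A ^ 2 := by
    rw [integral_fintype_prod_volume_eq_prod F, Fin.prod_univ_three]
    simp only [hF, Matrix.cons_val_zero, Matrix.cons_val_one, Matrix.cons_val]
    rw [gA_int A hA, integral_indicator measurableSet_Icc]
    simp
    have := Real.mul_self_sqrt hA.le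
    rw [max_eq_left (by linarith)]
    linear_combination (32 * A) * this
  have hnn : ∀ i y, 0 ≤ F i y := by
    intro i y
    fin_cases i
    · exact gA_nonneg A y
    · exact gA_nonneg A y
    · exact Set.indicator_nonneg (fun _ _ => zero_le_one) _
  rw [← hval, ofReal_integral_eq_lintegral_ofReal hIntg (Eventually.of_forall fun x => Finset.prod_nonneg fun i _ => hnn i _),
    ← lintegral_indicator Metric.isClosed_closedBall.measurableSet,
    ← (PiLp.volume_preserving_ofLp (Fin 3)).lintegral_comp_emb (MeasurableEquiv.toLp 2 (Fin 3 → ℝ)).symm.measurableEmbedding]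
  apply lintegral_mono_ae
  have hn0 : ∀ᵐ x : Fin 3 → ℝ, x 0 ≠ 0 := Measure.ae_eval_ne _ 0 0
  have hn1 : ∀ᵐ x : Fin 3 → ℝ, x 1 ≠ 0 := Measure.ae_eval_ne _ 1 0
  have q0 := (PiLp.volume_preserving_ofLp (Fin 3)).quasiMeasurePreserving.ae hn0
  have q1 := (PiLp.volume_preserving_ofLp (Fin 3)).quasiMeasurePreserving.ae hn1
  filter_upwards [q0, q1] with ξ h0 h1
  by_cases hm : ξ ∈ Metric.closedBall (0:E3) A
  swap
  · rw [Set.indicator_of_notMem hm]; exact zero_le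
  rw [Set.indicator_of_mem hm]
  apply ENNReal.ofReal_le_ofReal
  rw [mem_closedBall_zero_iff] at hm
  have hc : ∀ i, |ξ i| ≤ A := fun i => (by simpa using PiLp.norm_apply_le ξ i : |ξ i| ≤ ‖ξ‖).trans hm
  rw [Fin.prod_univ_three]
  simp only [hF, Matrix.cons_val_zero, Matrix.cons_val_one, Matrix.cons_val, gA]
  rw [Set.indicator_of_mem (by exact hc 0), Set.indicator_of_mem (by exact hc 1), Set.indicator_of_mem (by exact abs_le.1 (hc 2))]
  have p0 : 0 < |ξ 0| := abs_pos.2 h0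
  have p1 : 0 < |ξ 1| := abs_pos.2 h1
  rw [Real.rpow_neg p0.le, Real.rpow_neg p1.le, ← Real.sqrt_eq_rpow, ← Real.sqrt_eq_rpow, mul_one, ← mul_inv, ← one_div,
    ← Real.sqrt_mul p0.le]
  apply one_div_le_one_div_of_le (Real.sqrt_pos.2 (by positivity))
  unfold xih
  apply Real.sqrt_le_sqrt
  have := sq_nonneg (|ξ 0| - |ξ 1|)
  have := sq_abs (ξ 0)
  have := sq_abs (ξ 1)
  nlinarith


theorem cube_sqrt (P : ℝ) (hP : 0 ≤ P) : P * √P = √P ^ 3 := by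
  nth_rewrite 1 [← Real.sq_sqrt hP]; ring

theorem hessA_real (γ r R h2 z : ℝ) (hγ : 0 < γ) (hr : 0 < r) (hr1 : r ≤ 1) (hR : 1 ≤ R) (hh : 0 < h2)
    (hz : r ≤ z) (hz2 : z ≤ 2 * R) (hh8 : h2 ≤ 8 * z ^ 2) (Pm Pp : ℝ)
    (hPm : Pm = γ ^ 2 * h2 + (γ * z - 1) ^ 2) (hPp : Pp = γ ^ 2 * h2 + (γ * z + 1) ^ 2) :
    2 * (2 * γ ^ 5 * r / ((1 + 6 * γ) ^ 5 * R ^ 4) * h2) ≤ γ ^ 4 * h2 / (Pm * √Pm) - γ ^ 4 * h2 / (Pp * √Pp) := by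
  have hz0 : 0 < z := hr.trans_le hz
  have hPm0 : 0 < Pm := by rw [hPm]; positivity
  have hPp0 : 0 < Pp := by rw [hPp]; positivity
  rw [cube_sqrt _ hPm0.le, cube_sqrt _ hPp0.le]
  have e1 := Real.sq_sqrt hPm0.le
  have e2 := Real.sq_sqrt hPp0.le
  have q0 := Real.sqrt_pos.2 hPm0
  have p0 := Real.sqrt_pos.2 hPp0
  have hqp : √Pm ≤ √Pp := Real.sqrt_le_sqrt (by rw [hPm, hPp]; nlinarith [mul_pos hγ hz0])
  have hpD : √Pp ≤ 1 + 3 * (γ * z) := by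
    apply Real.sqrt_le_iff.2 ⟨by positivity, ?_⟩
    rw [hPp]
    nlinarith [mul_pos hγ hz0, mul_le_mul_of_nonneg_left hh8 (sq_nonneg γ)]
  have hd : √Pp ^ 2 - √Pm ^ 2 = 4 * (γ * z) := by rw [e1, e2, hPm, hPp]; ring
  generalize √Pm = q at *
  generalize √Pp = p at *
  have k1 : 4 * (γ * z) / p ^ 5 ≤ 1 / q ^ 3 - 1 / p ^ 3 := by
    rw [← hd, div_sub_div _ _ (by positivity) (by positivity), div_le_div_iff₀ (by positivity) (by positivity)]
    have a1 : 0 ≤ (p - q) * (p ^ 2 * (p ^ 2 + p * q + q ^ 2) - q ^ 3 * (p + q)) := by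
      apply mul_nonneg (by linarith)
      have : q ^ 3 * (p + q) ≤ p ^ 3 * (p + q) := by gcongr
      nlinarith [mul_pos p0 p0, mul_pos q0 q0, mul_pos (mul_pos p0 p0) (mul_pos q0 q0)]
    nlinarith [mul_nonneg (pow_nonneg p0.le 3) a1]
  have hD : 1 + 3 * (γ * z) ≤ (1 + 6 * γ) * R := by nlinarith
  have hzD : r * (1 + 3 * (γ * z)) ≤ z * (1 + 6 * γ) := by
    have : r * (γ * z) ≤ 1 * (γ * z) := by gcongr
    nlinarith
  set D := 1 + 3 * (γ * z) with hDd
  have hD0 : 0 < D := by positivity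
  have k2 : 4 * γ * r / ((1 + 6 * γ) ^ 5 * R ^ 4) ≤ 4 * (γ * z) / p ^ 5 := by
    calc 4 * γ * r / ((1 + 6 * γ) ^ 5 * R ^ 4) ≤ 4 * (γ * z) / D ^ 5 := by
          rw [div_le_div_iff₀ (by positivity) (by positivity)]
          have : D ^ 4 ≤ ((1 + 6 * γ) * R) ^ 4 := by gcongr
          calc 4 * γ * r * D ^ 5 = 4 * γ * (r * D) * D ^ 4 := by ring
            _ ≤ 4 * γ * (z * (1 + 6 * γ)) * ((1 + 6 * γ) * R) ^ 4 := by gcongr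
            _ = _ := by ring
      _ ≤ _ := by gcongr
  have k3 := mul_le_mul_of_nonneg_left (k2.trans k1) (by positivity : 0 ≤ γ ^ 4 * h2)
  refine le_trans (le_of_eq ?_) (k3.trans (le_of_eq ?_))
  · ring
  · ring

theorem hessB_real (γ r R u k z : ℝ) (hγ : 0 < γ) (hr : 0 < r) (hr1 : r ≤ 1) (hR : 1 ≤ R)
    (hz : r ≤ z) (hzu : 2 * z ≤ u) (hk1 : k ≤ u) (hk2 : -k ≤ u) (hu : u ≤ 2 * R) (Pm Pp Nm Np : ℝ)
    (hPm : Pm = γ ^ 2 * (u ^ 2 + k ^ 2) + (γ * z - 1) ^ 2) (hPp : Pp = γ ^ 2 * (u ^ 2 + k ^ 2) + (γ * z + 1) ^ 2)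
    (hNm : Nm = 2 * γ ^ 2 * k ^ 2 + (γ * u - γ * z + 1) ^ 2) (hNp : Np = 2 * γ ^ 2 * k ^ 2 + (γ * u - γ * z - 1) ^ 2) :
    2 * (γ ^ 3 * r / ((1 + 4 * γ) ^ 3 * R ^ 2)) ≤ γ ^ 2 * Nm / (Pm * √Pm) - γ ^ 2 * Np / (Pp * √Pp) := by
  have hz0 : 0 < z := hr.trans_le hz
  have hu0 : 0 < u := by linarith
  have hPm0 : 0 < Pm := by rw [hPm]; positivity
  have hPp0 : 0 < Pp := by rw [hPp]; positivity
  have hNm0 : 0 ≤ Nm := by rw [hNm]; positivity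
  have hksq : k ^ 2 ≤ u ^ 2 := sq_le_sq' (by linarith) hk1
  rw [cube_sqrt _ hPm0.le, cube_sqrt _ hPp0.le]
  have q0 := Real.sqrt_pos.2 hPm0
  have p0 := Real.sqrt_pos.2 hPp0
  have hqp : √Pm ≤ √Pp := Real.sqrt_le_sqrt (by rw [hPm, hPp]; nlinarith [mul_pos hγ hz0])
  have hpD : √Pp ≤ 1 + 2 * (γ * u) := by
    apply Real.sqrt_le_iff.2 ⟨by positivity, ?_⟩
    rw [hPp]
    have h1 : (γ * z + 1) ^ 2 ≤ (γ * u / 2 + 1) ^ 2 := by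
      gcongr
      nlinarith
    nlinarith [mul_pos hγ hu0, mul_le_mul_of_nonneg_left hksq (sq_nonneg γ)]
  generalize √Pm = q at *
  generalize √Pp = p at *
  have hN : 2 * (γ * u) ≤ Nm - Np := by rw [hNm, hNp]; nlinarith
  have k1 : 2 * (γ * u) / p ^ 3 ≤ Nm / q ^ 3 - Np / p ^ 3 := by
    calc 2 * (γ * u) / p ^ 3 ≤ (Nm - Np) / p ^ 3 := by gcongr
      _ = Nm / p ^ 3 - Np / p ^ 3 := by ring
      _ ≤ _ := by gcongr
  have hD : 1 + 2 * (γ * u) ≤ (1 + 4 * γ) * R := by nlinarith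
  have hzD : r * (1 + 2 * (γ * u)) ≤ u * (1 + 4 * γ) := by
    have : r * (γ * u) ≤ 1 * (γ * u) := by gcongr
    nlinarith [mul_pos hγ hu0]
  set D := 1 + 2 * (γ * u) with hDd
  have hD0 : 0 < D := by positivity
  have k2 : 2 * γ * r / ((1 + 4 * γ) ^ 3 * R ^ 2) ≤ 2 * (γ * u) / p ^ 3 := by
    calc 2 * γ * r / ((1 + 4 * γ) ^ 3 * R ^ 2) ≤ 2 * (γ * u) / D ^ 3 := by
          rw [div_le_div_iff₀ (by positivity) (by positivity)]
          have : D ^ 2 ≤ ((1 + 4 * γ) * R) ^ 2 := by gcongr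
          calc 2 * γ * r * D ^ 3 = 2 * γ * (r * D) * D ^ 2 := by ring
            _ ≤ 2 * γ * (u * (1 + 4 * γ)) * ((1 + 4 * γ) * R) ^ 2 := by gcongr
            _ = _ := by ring
      _ ≤ _ := by gcongr
  have k3 := mul_le_mul_of_nonneg_left (k2.trans k1) (by positivity : 0 ≤ γ ^ 2)
  refine le_trans (le_of_eq ?_) (k3.trans (le_of_eq ?_))
  · ring
  · ring

theorem lin_between (a b s1 s2 s : ℝ) (h : s ∈ Set.Icc s1 s2) (h1 : 0 ≤ a + s1 * b) (h2 : 0 ≤ a + s2 * b) : 0 ≤ a + s * b := by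
  rcases le_total 0 b with hb | hb
  · nlinarith [h.1]
  · nlinarith [h.2]



def setA (r R σ : ℝ) : Set E3 :=
  {ξ | (r ≤ σ * ξ 2 ∧ σ * ξ 2 ≤ 2 * R ∧ ξ 0 ≤ 2 * (σ * ξ 2) ∧ -ξ 0 ≤ 2 * (σ * ξ 2) ∧ ξ 1 ≤ 2 * (σ * ξ 2) ∧ -ξ 1 ≤ 2 * (σ * ξ 2)) ∧ r ≤ xih ξ}

def setB (r R σ1 σ : ℝ) (i j : Fin 3) : Set E3 :=
  {ξ | r ≤ σ * ξ 2 ∧ 2 * (σ * ξ 2) ≤ σ1 * ξ i ∧ ξ j ≤ σ1 * ξ i ∧ -ξ j ≤ σ1 * ξ i ∧ σ1 * ξ i ≤ 2 * R}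

theorem xih_cont : Continuous xih := by unfold xih; fun_prop

theorem setA_closed (r R σ : ℝ) : IsClosed (setA r R σ) := by
  have := xih_cont
  unfold setA
  simp only [Set.ofPred_and]
  refine IsClosed.inter (IsClosed.inter ?_ (IsClosed.inter ?_ (IsClosed.inter ?_ (IsClosed.inter ?_ (IsClosed.inter ?_ ?_))))) ?_
  all_goals exact isClosed_le (by fun_prop) (by fun_prop)

theorem setB_closed (r R σ1 σ : ℝ) (i j : Fin 3) : IsClosed (setB r R σ1 σ i j) := by
  unfold setB
  simp only [Set.ofPred_and]
  refine (IsClosed.inter ?_ (IsClosed.inter ?_ (IsClosed.inter ?_ (IsClosed.inter ?_ ?_)))) 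
  all_goals exact isClosed_le (by fun_prop) (by fun_prop)

theorem norm3 (ξ : E3) : ‖ξ‖ ^ 2 = ξ 0 ^ 2 + ξ 1 ^ 2 + ξ 2 ^ 2 := by
  rw [EuclideanSpace.norm_sq_eq, Fin.sum_univ_three]; simp

theorem inner3 (ξ v : E3) : inner ℝ ξ v = v 0 * ξ 0 + v 1 * ξ 1 + v 2 * ξ 2 := by
  rw [PiLp.inner_apply, Fin.sum_univ_three]; simp

theorem setA_ball (r R σ : ℝ) (hr : 0 < r) (hR : 1 ≤ R) (hσ : σ ^ 2 = 1) : setA r R σ ⊆ Metric.closedBall 0 (6 * R) := by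
  rintro ξ ⟨⟨h1, h2, h3, h4, h5, h6⟩, _⟩
  rw [mem_closedBall_zero_iff]
  apply abs_le_of_sq_le_sq' _ (by linarith) |>.2
  rw [norm3]
  have a0 : ξ 0 ^ 2 ≤ (4 * R) ^ 2 := sq_le_sq' (by linarith) (by linarith)
  have a1 : ξ 1 ^ 2 ≤ (4 * R) ^ 2 := sq_le_sq' (by linarith) (by linarith)
  have a2 : (σ * ξ 2) ^ 2 ≤ (2 * R) ^ 2 := sq_le_sq' (by linarith) (by linarith)
  rw [mul_pow, hσ] at a2
  nlinarith

theorem setB_ball (r R σ1 σ : ℝ) (i j : Fin 3) (hij : (i = 0 ∧ j = 1) ∨ (i = 1 ∧ j = 0)) (hr : 0 < r) (hR : 1 ≤ R) (hσ : σ ^ 2 = 1) (hσ1 : σ1 ^ 2 = 1) :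
    setB r R σ1 σ i j ⊆ Metric.closedBall 0 (6 * R) := by
  rintro ξ ⟨h1, h2, h3, h4, h5⟩
  rw [mem_closedBall_zero_iff]
  apply abs_le_of_sq_le_sq' _ (by linarith) |>.2
  rw [norm3]
  have a0 : (σ1 * ξ i) ^ 2 ≤ (2 * R) ^ 2 := sq_le_sq' (by linarith) (by linarith)
  have a1 : ξ j ^ 2 ≤ (2 * R) ^ 2 := sq_le_sq' (by linarith) (by linarith)
  have a2 : (σ * ξ 2) ^ 2 ≤ (2 * R) ^ 2 := sq_le_sq' (by linarith) (by linarith)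
  rw [mul_pow, hσ] at a2
  rw [mul_pow, hσ1] at a0
  rcases hij with ⟨rfl, rfl⟩ | ⟨rfl, rfl⟩ <;> nlinarith

/-- vertical direction -/
def vA : E3 := EuclideanSpace.single 2 1
/-- slanted direction -/
def vB (σ1 σ : ℝ) (i : Fin 3) : E3 := σ1 • EuclideanSpace.single i 1 + σ • EuclideanSpace.single 2 1

theorem xih_vA (ξ : E3) (s : ℝ) : xih (ξ + s • vA) = xih ξ := by
  unfold xih vA; simp

theorem setA_oc (r R σ : ℝ) (ξ : E3) : Set.OrdConnected {s : ℝ | ξ + s • vA ∈ setA r R σ} := by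
  constructor
  rintro s1 ⟨⟨h1, h2, h3, h4, h5, h6⟩, h7⟩ s2 ⟨⟨k1, k2, k3, k4, k5, k6⟩, k7⟩ s hs
  refine ⟨⟨?_, ?_, ?_, ?_, ?_, ?_⟩, ?_⟩
  rotate_right
  · rw [xih_vA] at *; exact h7
  all_goals simp [vA] at *
  · have := lin_between (σ * ξ 2 - r) σ s1 s2 s hs (by linarith) (by linarith); linarith
  · have := lin_between (2 * R - σ * ξ 2) (-σ) s1 s2 s hs (by linarith) (by linarith); linarith
  · have := lin_between (2 * (σ * ξ 2) - ξ 0) (2 * σ) s1 s2 s hs (by linarith) (by linarith); linarith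
  · have := lin_between (2 * (σ * ξ 2) + ξ 0) (2 * σ) s1 s2 s hs (by linarith) (by linarith); linarith
  · have := lin_between (2 * (σ * ξ 2) - ξ 1) (2 * σ) s1 s2 s hs (by linarith) (by linarith); linarith
  · have := lin_between (2 * (σ * ξ 2) + ξ 1) (2 * σ) s1 s2 s hs (by linarith) (by linarith); linarith

theorem setB_oc (r R σ1 σ : ℝ) (i j : Fin 3) (hij : (i = 0 ∧ j = 1) ∨ (i = 1 ∧ j = 0)) (ξ : E3) :
    Set.OrdConnected {s : ℝ | ξ + s • vB σ1 σ i ∈ setB r R σ1 σ i j} := by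
  constructor
  rintro s1 ⟨h1, h2, h3, h4, h5⟩ s2 ⟨k1, k2, k3, k4, k5⟩ s hs
  rcases hij with ⟨rfl, rfl⟩ | ⟨rfl, rfl⟩
  all_goals
    refine ⟨?_, ?_, ?_, ?_, ?_⟩
    all_goals simp [vB] at *
  · have := lin_between (σ * ξ 2 - r) (σ * σ) s1 s2 s hs (by linarith) (by linarith); linarith
  · have := lin_between (σ1 * ξ 0 - 2 * (σ * ξ 2)) (σ1 * σ1 - 2 * (σ * σ)) s1 s2 s hs (by linarith) (by linarith); linarith
  · have := lin_between (σ1 * ξ 0 - ξ 1) (σ1 * σ1) s1 s2 s hs (by linarith) (by linarith); linarith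
  · have := lin_between (σ1 * ξ 0 + ξ 1) (σ1 * σ1) s1 s2 s hs (by linarith) (by linarith); linarith
  · have := lin_between (2 * R - σ1 * ξ 0) (-(σ1 * σ1)) s1 s2 s hs (by linarith) (by linarith); linarith
  · have := lin_between (σ * ξ 2 - r) (σ * σ) s1 s2 s hs (by linarith) (by linarith); linarith
  · have := lin_between (σ1 * ξ 1 - 2 * (σ * ξ 2)) (σ1 * σ1 - 2 * (σ * σ)) s1 s2 s hs (by linarith) (by linarith); linarith
  · have := lin_between (σ1 * ξ 1 - ξ 0) (σ1 * σ1) s1 s2 s hs (by linarith) (by linarith); linarith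
  · have := lin_between (σ1 * ξ 1 + ξ 0) (σ1 * σ1) s1 s2 s hs (by linarith) (by linarith); linarith
  · have := lin_between (2 * R - σ1 * ξ 1) (-(σ1 * σ1)) s1 s2 s hs (by linarith) (by linarith); linarith

theorem hessA (γ r R σ : ℝ) (hγ : 0 < γ) (hr : 0 < r) (hr1 : r ≤ 1) (hR : 1 ≤ R) (hσ : σ ^ 2 = 1) (ξ : E3) (hξ : ξ ∈ setA r R σ) :
    2 * (2 * γ ^ 5 * r / ((1 + 6 * γ) ^ 5 * R ^ 4) * xih ξ ^ 2) ≤ Hq γ (-σ) vA ξ - Hq γ σ vA ξ := by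
  obtain ⟨⟨h1, h2, h3, h4, h5, h6⟩, h7⟩ := hξ
  have hx : xih ξ ^ 2 = ξ 0 ^ 2 + ξ 1 ^ 2 := Real.sq_sqrt (by positivity)
  have hx0 : 0 < xih ξ ^ 2 := by have := hr.trans_le h7; positivity
  have key := hessA_real γ r R (xih ξ ^ 2) (σ * ξ 2) hγ hr hr1 hR hx0 h1 h2
    (by
      have a0 : ξ 0 ^ 2 ≤ (2 * (σ * ξ 2)) ^ 2 := sq_le_sq' (by linarith) (by linarith)
      have a1 : ξ 1 ^ 2 ≤ (2 * (σ * ξ 2)) ^ 2 := sq_le_sq' (by linarith) (by linarith)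
      rw [hx]; nlinarith) (Pq γ (-σ) ξ) (Pq γ σ ξ)
    (by rw [Pq_eq γ (-σ) (by rw [neg_sq, hσ]), hx]; linear_combination (-γ ^ 2 * ξ 2 ^ 2 + 1) * hσ)
    (by rw [Pq_eq γ σ hσ, hx]; linear_combination (-γ ^ 2 * ξ 2 ^ 2 + 1) * hσ)
  have e : ∀ σ' : ℝ, σ' ^ 2 = 1 → Hq γ σ' vA ξ = γ ^ 4 * xih ξ ^ 2 / (Pq γ σ' ξ * √(Pq γ σ' ξ)) := by
    intro σ' hσ'
    unfold Hq sq2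
    congr 1
    rw [Pq_eq γ σ' hσ', hx, norm3, inner3]
    simp [vA]
    ring
  rw [e _ (by rw [neg_sq, hσ]), e _ hσ]
  exact key

theorem hessB (γ r R σ1 σ : ℝ) (i j : Fin 3) (hij : (i = 0 ∧ j = 1) ∨ (i = 1 ∧ j = 0)) (hγ : 0 < γ) (hr : 0 < r) (hr1 : r ≤ 1) (hR : 1 ≤ R) (hσ : σ ^ 2 = 1)
    (hσ1 : σ1 ^ 2 = 1) (ξ : E3) (hξ : ξ ∈ setB r R σ1 σ i j) :
    2 * (γ ^ 3 * r / ((1 + 4 * γ) ^ 3 * R ^ 2)) ≤ Hq γ (-σ) (vB σ1 σ i) ξ - Hq γ σ (vB σ1 σ i) ξ := by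
  obtain ⟨h1, h2, h3, h4, h5⟩ := hξ
  have hs : ξ 0 ^ 2 + ξ 1 ^ 2 = (σ1 * ξ i) ^ 2 + ξ j ^ 2 := by
    rw [mul_pow, hσ1]
    rcases hij with ⟨rfl, rfl⟩ | ⟨rfl, rfl⟩ <;> ring
  have key := hessB_real γ r R (σ1 * ξ i) (ξ j) (σ * ξ 2) hγ hr hr1 hR h1 h2 h3 h4 h5 (Pq γ (-σ) ξ) (Pq γ σ ξ) _ _
    (by rw [Pq_eq γ (-σ) (by rw [neg_sq, hσ]), hs]; linear_combination (-γ ^ 2 * ξ 2 ^ 2 + 1) * hσ)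
    (by rw [Pq_eq γ σ hσ, hs]; linear_combination (-γ ^ 2 * ξ 2 ^ 2 + 1) * hσ) rfl rfl
  have hn : ‖vB σ1 σ i‖ ^ 2 = 2 := by
    rw [norm3]
    rcases hij with ⟨rfl, rfl⟩ | ⟨rfl, rfl⟩ <;> simp [vB] <;> linarith
  have hin : inner ℝ ξ (vB σ1 σ i) = σ1 * ξ i + σ * ξ 2 := by
    rw [inner3]
    rcases hij with ⟨rfl, rfl⟩ | ⟨rfl, rfl⟩ <;> simp [vB]
  have hv2 : (vB σ1 σ i) 2 = σ := by
    rcases hij with ⟨rfl, rfl⟩ | ⟨rfl, rfl⟩ <;> simp [vB]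
  have e : ∀ δ : ℝ, δ ^ 2 = 1 → Hq γ (δ * σ) (vB σ1 σ i) ξ =
     γ ^ 2 * (2 * γ ^ 2 * (ξ j) ^ 2 + (γ * (σ1 * ξ i) - γ * (σ * ξ 2) - δ) ^ 2) / (Pq γ (δ * σ) ξ * √(Pq γ (δ * σ) ξ)) := by
    intro δ hδ
    have hδσ : (δ * σ) ^ 2 = 1 := by rw [mul_pow, hδ, hσ]; norm_num
    unfold Hq sq2
    congr 1
    rw [Pq_eq γ (δ * σ) hδσ, hs, hn, hin, hv2]
    linear_combination (-2 * γ ^ 4 * ξ 2 ^ 2 - 2 * γ ^ 3 * δ * (σ1 * ξ i + σ * ξ 2) + 2 * γ ^ 2 * δ ^ 2 - γ ^ 2 * δ ^ 2 * (σ ^ 2 + 1)) * hσ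
  have e1 := e 1 (by norm_num)
  have e2 := e (-1) (by norm_num)
  rw [one_mul] at e1
  rw [neg_one_mul, sub_neg_eq_add] at e2
  rw [e1, e2]
  exact key


def GoodSet (γ ε2 R κ : ℝ) (S : Set E3) : Prop :=
  MeasurableSet S ∧ S ⊆ Metric.closedBall 0 (6 * R) ∧
    ∀ (τ : ℝ) (x : E3), ‖∫ ξ in S, osc γ ε2 τ x ξ‖ₑ ≤ ENNReal.ofReal κ * hk τ

theorem hk_zero : hk 0 = ⊤ := by unfold hk; simp

theorem fin_aux (R κ τ y : ℝ) (z : ℂ) (hR : 0 < R) (hκ : 0 ≤ κ) (hτ : τ ≠ 0)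
    (h : ENNReal.ofReal R * ‖z‖ₑ ≤ ENNReal.ofReal y) (hy : y ≤ R * (κ * (1 / √|τ|))) : ‖z‖ₑ ≤ ENNReal.ofReal κ * hk τ := by
  rw [hk_eq τ hτ, ← ENNReal.ofReal_mul hκ]
  rw [← ofReal_norm, ← ENNReal.ofReal_mul hR.le] at h
  rw [← ofReal_norm]
  apply ENNReal.ofReal_le_ofReal
  have h2 := h.trans (ENNReal.ofReal_le_ofReal hy)
  have h3 := (ENNReal.ofReal_le_ofReal_iff (by positivity)).1 h2
  exact le_of_mul_le_mul_left h3 hR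

theorem sqrt_lower (c r a : ℝ) (hc : 0 < c) (hr : 0 < r) (hr1 : r ≤ 1) (ha : 0 < a) : √c * r ^ 2 / a ≤ √(c * r / a ^ 2) := by
  rw [Real.sqrt_div' _ (by positivity), Real.sqrt_sq ha.le, Real.sqrt_mul hc.le]
  gcongr
  apply Real.le_sqrt_of_sq_le
  calc (r ^ 2) ^ 2 = r * r ^ 3 := by ring
    _ ≤ r * 1 := by gcongr; exact pow_le_one₀ hr.le hr1
    _ = r := mul_one r

theorem kerA (γ ε2 r R σ : ℝ) (hγ : 0 < γ) (hε : ε2 = 1 ∨ ε2 = -1) (hr : 0 < r) (hr1 : r ≤ 1) (hR : 1 ≤ R) (hσ : σ = 1 ∨ σ = -1) :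
    GoodSet γ ε2 R (12288 / √(2 * γ ^ 5 / (1 + 6 * γ) ^ 5) * (R ^ 3 / r ^ 2)) (setA r R σ) := by
  have hσ2 : σ ^ 2 = 1 := by rcases hσ with rfl | rfl <;> norm_num
  have hcl := setA_closed r R σ
  have hball := setA_ball r R σ hr hR hσ2
  refine ⟨hcl.measurableSet, hball, ?_⟩
  intro τ x
  have hR0 : 0 < R := by linarith
  have hκ : 0 < 12288 / √(2 * γ ^ 5 / (1 + 6 * γ) ^ 5) * (R ^ 3 / r ^ 2) := by positivity
  by_cases hτ : τ = 0
  · rw [hτ, hk_zero, ENNReal.mul_top (by simpa using hκ)]; exact le_top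
  set m := 2 * γ ^ 5 * r / ((1 + 6 * γ) ^ 5 * R ^ 4) with hm
  have hm0 : 0 < m := by positivity
  have hτ0 : 0 < |τ| := abs_pos.2 hτ
  have main := kernel_piece γ ε2 τ R hR x vA (by simp [vA]) (setA r R σ) hcl hball
    (fun ξ => ENNReal.ofReal (6 / √(|τ| * m)) * ENNReal.ofReal (1 / xih ξ)) (by
      intro ξ
      rw [← ENNReal.ofReal_mul (by positivity), ← ofReal_norm]
      apply ENNReal.ofReal_le_ofReal
      have hx0 : 0 ≤ xih ξ := Real.sqrt_nonneg _
      by_cases hh : r ≤ xih ξ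
      · have hxp : 0 < xih ξ := hr.trans_le hh
        have lb := line_bound γ ε2 τ (m * xih ξ ^ 2) R hγ hε hτ (by positivity) (setA r R σ) hcl vA ξ x
          (setA_oc r R σ ξ) (by
            intro η hη
            have : 0 < xih η := hr.trans_le hη.2
            have h2 : 0 < η 0 ^ 2 + η 1 ^ 2 := Real.sqrt_pos.1 this
            rw [Pq_eq _ _ (by norm_num), Pq_eq _ _ (by norm_num)]
            constructor <;> positivity) (by
            have hH : ∀ s : ℝ, ξ + s • vA ∈ setA r R σ → 2 * (m * xih ξ ^ 2) ≤ Hq γ (-σ) vA (ξ + s • vA) - Hq γ σ vA (ξ + s • vA) := by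
              intro s hs
              have := hessA γ r R σ hγ hr hr1 hR hσ2 _ hs
              rw [xih_vA] at this
              exact this
            rcases hσ with rfl | rfl
            · left; exact hH
            · right; rw [neg_neg] at hH; exact hH)
        refine lb.trans (le_of_eq ?_)
        rw [← mul_assoc, Real.sqrt_mul (by positivity), Real.sqrt_sq hx0, div_mul_div_comm, mul_one]
      · have : ∫ s in Set.Icc 0 R, (setA r R σ).indicator (osc γ ε2 τ x) (ξ + s • vA) = 0 := by
          apply setIntegral_eq_zero_of_forall_eq_zero
          intro s hs
          apply Set.indicator_of_notMem
          intro hm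
          apply hh
          have := hm.2
          rwa [xih_vA] at this
        rw [this]
        simp only [norm_zero]
        positivity)
  rw [lintegral_const_mul' _ _ ENNReal.ofReal_ne_top] at main
  have main2 := main.trans (mul_le_mul_right (inv_xih_int (8 * R) (by positivity)) _)
  rw [← ENNReal.ofReal_mul (by positivity)] at main2
  refine fin_aux R _ τ _ _ hR0 hκ.le hτ main2 ?_
  have hsq : √(2 * γ ^ 5 / (1 + 6 * γ) ^ 5) * r ^ 2 / R ^ 2 ≤ √m := by
    have := sqrt_lower (2 * γ ^ 5 / (1 + 6 * γ) ^ 5) r (R ^ 2) (by positivity) hr hr1 (by positivity)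
    convert this using 2
    rw [hm]; field_simp
  rw [Real.sqrt_mul (abs_nonneg _)]
  set c := √(2 * γ ^ 5 / (1 + 6 * γ) ^ 5) with hc
  have hc0 : 0 < c := by positivity
  have hst : 0 < √|τ| := Real.sqrt_pos.2 hτ0
  calc 6 / (√|τ| * √m) * (32 * (8 * R) ^ 2) ≤ 6 / (√|τ| * (c * r ^ 2 / R ^ 2)) * (32 * (8 * R) ^ 2) := by gcongr
    _ = R * (12288 / c * (R ^ 3 / r ^ 2) * (1 / √|τ|)) := by field_simp; norm_num

theorem kerB (γ ε2 r R σ1 σ : ℝ) (i j : Fin 3) (hij : (i = 0 ∧ j = 1) ∨ (i = 1 ∧ j = 0)) (hγ : 0 < γ) (hε : ε2 = 1 ∨ ε2 = -1) (hr : 0 < r) (hr1 : r ≤ 1) (hR : 1 ≤ R) (hσ : σ = 1 ∨ σ = -1)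
    (hσ1 : σ1 = 1 ∨ σ1 = -1) :
    GoodSet γ ε2 R (3072 * (volume (Metric.ball (0:E3) 1)).toReal / √(γ ^ 3 / (1 + 4 * γ) ^ 3) * (R ^ 3 / r ^ 2)) (setB r R σ1 σ i j) := by
  have hσ2 : σ ^ 2 = 1 := by rcases hσ with rfl | rfl <;> norm_num
  have hσ12 : σ1 ^ 2 = 1 := by rcases hσ1 with rfl | rfl <;> norm_num
  have hcl := setB_closed r R σ1 σ i j
  have hball := setB_ball r R σ1 σ i j hij hr hR hσ2 hσ12
  refine ⟨hcl.measurableSet, hball, ?_⟩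
  intro τ x
  have hR0 : 0 < R := by linarith
  set V := (volume (Metric.ball (0:E3) 1)).toReal with hV
  have hV0 : 0 < V := ENNReal.toReal_pos (Metric.measure_ball_pos _ _ one_pos).ne' measure_ball_lt_top.ne
  have hκ : 0 < 3072 * V / √(γ ^ 3 / (1 + 4 * γ) ^ 3) * (R ^ 3 / r ^ 2) := by positivity
  by_cases hτ : τ = 0
  · rw [hτ, hk_zero, ENNReal.mul_top (by simpa using hκ)]; exact le_top
  set m := γ ^ 3 * r / ((1 + 4 * γ) ^ 3 * R ^ 2) with hm
  have hm0 : 0 < m := by positivity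
  have hτ0 : 0 < |τ| := abs_pos.2 hτ
  have hvn : ‖vB σ1 σ i‖ ≤ 2 := by
    unfold vB
    refine (norm_add_le _ _).trans ?_
    rw [norm_smul, norm_smul]
    rcases hσ with rfl | rfl <;> rcases hσ1 with rfl | rfl <;> norm_num
  have main := kernel_piece γ ε2 τ R hR x (vB σ1 σ i) hvn (setB r R σ1 σ i j) hcl hball
    (fun ξ => ENNReal.ofReal (6 / √(|τ| * m))) (by
      intro ξ
      rw [← ofReal_norm]
      apply ENNReal.ofReal_le_ofReal
      exact line_bound γ ε2 τ m R hγ hε hτ (by positivity) (setB r R σ1 σ i j) hcl (vB σ1 σ i) ξ x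
          (setB_oc r R σ1 σ i j hij ξ) (by
            rintro η ⟨h1, h2, h3, h4, h5⟩
            have hs : η 0 ^ 2 + η 1 ^ 2 = (σ1 * η i) ^ 2 + η j ^ 2 := by
              rw [mul_pow, hσ12]
              rcases hij with ⟨rfl, rfl⟩ | ⟨rfl, rfl⟩ <;> ring
            have hp : 0 < σ1 * η i := by linarith
            rw [Pq_eq _ _ (by norm_num), Pq_eq _ _ (by norm_num), hs]
            constructor <;> positivity) (by
            have hH : ∀ s : ℝ, ξ + s • vB σ1 σ i ∈ setB r R σ1 σ i j → 2 * m ≤ Hq γ (-σ) (vB σ1 σ i) (ξ + s • vB σ1 σ i) - Hq γ σ (vB σ1 σ i) (ξ + s • vB σ1 σ i) := by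
              intro s hs
              exact hessB γ r R σ1 σ i j hij hγ hr hr1 hR hσ2 hσ12 _ hs
            rcases hσ with rfl | rfl
            · left; exact hH
            · right; rw [neg_neg] at hH; exact hH))
  rw [setLIntegral_const, Measure.addHaar_closedBall _ _ (by positivity), ← ENNReal.ofReal_toReal (a := volume (Metric.ball (0:E3) 1)) measure_ball_lt_top.ne, ← hV,
    ← ENNReal.ofReal_mul (by positivity), ← ENNReal.ofReal_mul (by positivity)] at main
  refine fin_aux R _ τ _ _ hR0 hκ.le hτ main ?_
  have hsq : √(γ ^ 3 / (1 + 4 * γ) ^ 3) * r ^ 2 / R ≤ √m := by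
    have := sqrt_lower (γ ^ 3 / (1 + 4 * γ) ^ 3) r R (by positivity) hr hr1 (by positivity)
    convert this using 2
    rw [hm]; field_simp
  rw [Real.sqrt_mul (abs_nonneg _)]
  set c := √(γ ^ 3 / (1 + 4 * γ) ^ 3) with hc
  have hc0 : 0 < c := by positivity
  have hst : 0 < √|τ| := Real.sqrt_pos.2 hτ0
  have hfr : Module.finrank ℝ E3 = 3 := by simp
  rw [hfr]
  calc 6 / (√|τ| * √m) * ((8 * R) ^ 3 * V) ≤ 6 / (√|τ| * (c * r ^ 2 / R)) * ((8 * R) ^ 3 * V) := by gcongr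
    _ = R * (3072 * V / c * (R ^ 3 / r ^ 2) * (1 / √|τ|)) := by field_simp; norm_num

theorem GoodSet.mono {γ ε2 R κ κ' : ℝ} {S : Set E3} (h : GoodSet γ ε2 R κ S) (hk' : κ ≤ κ') : GoodSet γ ε2 R κ' S :=
  ⟨h.1, h.2.1, fun τ x => (h.2.2 τ x).trans (mul_le_mul_left (ENNReal.ofReal_le_ofReal hk') _)⟩

def sg (b : Bool) : ℝ := if b then 1 else -1

theorem sg_or (b : Bool) : sg b = 1 ∨ sg b = -1 := by cases b <;> simp [sg]

theorem sg_abs (x : ℝ) : ∃ b, sg b * x = |x| := by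
  rcases le_total 0 x with h | h
  · exact ⟨true, by simp [sg, abs_of_nonneg h]⟩
  · exact ⟨false, by simp [sg, abs_of_nonpos h]⟩

def pieces (r R : ℝ) : Option Bool × Bool × Bool → Set E3
  | (none, _, b) => setA r R (sg b)
  | (some true, a, b) => setB r R (sg a) (sg b) 0 1
  | (some false, a, b) => setB r R (sg a) (sg b) 1 0

theorem pieces_good (γ : ℝ) (hγ : 0 < γ) : ∃ C : ℝ, 0 < C ∧ ∀ ε2 r R : ℝ, (ε2 = 1 ∨ ε2 = -1) → 0 < r → r ≤ 1 → 1 ≤ R →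
    ∀ k, GoodSet γ ε2 R (C * (R ^ 3 / r ^ 2)) (pieces r R k) := by
  refine ⟨max (12288 / √(2 * γ ^ 5 / (1 + 6 * γ) ^ 5)) (3072 * (volume (Metric.ball (0:E3) 1)).toReal / √(γ ^ 3 / (1 + 4 * γ) ^ 3)), lt_max_of_lt_left (by positivity), ?_⟩
  intro ε2 r R hε hr hr1 hR k
  have hR0 : 0 < R := by linarith
  match k with
  | (none, _, b) => exact (kerA γ ε2 r R (sg b) hγ hε hr hr1 hR (sg_or b)).mono (by gcongr; exact le_max_left _ _)
  | (some true, a, b) => exact (kerB γ ε2 r R (sg a) (sg b) 0 1 (by simp) hγ hε hr hr1 hR (sg_or b) (sg_or a)).mono (by gcongr; exact le_max_right _ _)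
  | (some false, a, b) => exact (kerB γ ε2 r R (sg a) (sg b) 1 0 (by simp) hγ hε hr hr1 hR (sg_or b) (sg_or a)).mono (by gcongr; exact le_max_right _ _)

theorem pieces_cover (r R : ℝ) (ξ : E3) (h1 : r ≤ xih ξ) (h2 : r ≤ |ξ 2|) (h3 : ‖ξ‖ ≤ 2 * R) : ∃ k, ξ ∈ pieces r R k := by
  have hc : ∀ i, |ξ i| ≤ 2 * R := fun i => (by simpa using PiLp.norm_apply_le ξ i : |ξ i| ≤ ‖ξ‖).trans h3
  obtain ⟨b, hb⟩ := sg_abs (ξ 2)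
  obtain ⟨a0, ha0⟩ := sg_abs (ξ 0)
  obtain ⟨a1, ha1⟩ := sg_abs (ξ 1)
  have l0 := le_abs_self (ξ 0)
  have l1 := le_abs_self (ξ 1)
  have n0 := neg_le_abs (ξ 0)
  have n1 := neg_le_abs (ξ 1)
  have c0 := hc 0
  have c1 := hc 1
  have c2 := hc 2
  by_cases hA : |ξ 0| ≤ 2 * |ξ 2| ∧ |ξ 1| ≤ 2 * |ξ 2|
  · obtain ⟨hA0, hA1⟩ := hA
    refine ⟨(none, true, b), ⟨?_, ?_, ?_, ?_, ?_, ?_⟩, h1⟩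
    all_goals rw [hb]; linarith
  · rcases le_total |ξ 0| |ξ 1| with h | h
    · have : 2 * |ξ 2| ≤ |ξ 1| := by
        by_contra hh
        push Not at hh
        exact hA ⟨by linarith, by linarith⟩
      refine ⟨(some false, a1, b), ?_, ?_, ?_, ?_, ?_⟩
      all_goals try rw [hb]
      all_goals try rw [ha1]
      all_goals linarith
    · have : 2 * |ξ 2| ≤ |ξ 0| := by
        by_contra hh
        push Not at hh
        exact hA ⟨by linarith, by linarith⟩
      refine ⟨(some true, a0, b), ?_, ?_, ?_, ?_, ?_⟩
      all_goals try rw [hb]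
      all_goals try rw [ha0]
      all_goals linarith


theorem osc_mul_conj (γ ε2 τ τ' : ℝ) (x x' ξ : E3) :
    osc γ ε2 τ x ξ * (starRingEnd ℂ) (osc γ ε2 τ' x' ξ) = osc γ ε2 (τ - τ') (x - x') ξ := by
  unfold osc
  rw [← Complex.exp_conj, ← Complex.exp_add]
  congr 1
  rw [map_mul, Complex.conj_I, Complex.conj_ofReal, inner_sub_right]
  push_cast
  ring

theorem osc_meas2 (γ ε2 δ : ℝ) (X : ℝ → E3) (hX : Measurable X) :
    Measurable (fun p : ℝ × E3 => osc γ ε2 (δ * p.1) (X p.1) p.2) := by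
  have := (osc_cont γ ε2).measurable
  exact this.comp (g := fun p : ℝ × E3 × E3 => osc γ ε2 p.1 p.2.1 p.2.2) (f := fun p : ℝ × E3 => (δ * p.1, X p.1, p.2)) (by fun_prop)

theorem hk_scale (δ s : ℝ) (hδ : δ ≠ 0) : hk (δ * s) = ENNReal.ofReal (1 / √|δ|) * hk s := by
  rw [← hk_eq δ hδ]
  unfold hk
  rw [abs_mul, ENNReal.ofReal_mul (abs_nonneg _), ENNReal.mul_rpow_of_ne_top ENNReal.ofReal_ne_top ENNReal.ofReal_ne_top]

/-- bilinear bound on a good set -/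
theorem tt_B (γ ε2 δ R κ : ℝ) (hδ : δ ≠ 0) (hκ : 0 ≤ κ) (S : Set E3) (hS : GoodSet γ ε2 R κ S) (X : ℝ → E3) (hX : Measurable X)
    (h : ℝ → ℂ) (hm : Measurable h) (hi : Integrable h) :
    ∫⁻ ξ in S, ‖∫ t, h t * osc γ ε2 (δ * t) (X t) ξ‖ₑ ^ 2 ≤
      ENNReal.ofReal (12 * (κ * (1 / √|δ|))) * (∫⁻ t, ‖h t‖ₑ ^ (4/3 : ℝ)) ^ (3/2 : ℝ) := by
  obtain ⟨hSm, hSb, hK⟩ := hS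
  have hSfin : volume S < ⊤ := (measure_mono hSb).trans_lt measure_closedBall_lt_top
  have : IsFiniteMeasure (volume.restrict S) := ⟨by simpa using hSfin⟩
  have hom := osc_meas2 γ ε2 δ X hX
  set B : E3 → ℂ := fun ξ => ∫ t, h t * osc γ ε2 (δ * t) (X t) ξ with hB
  set Φ : E3 → ℝ × ℝ → ℂ := fun ξ p => (h p.1 * osc γ ε2 (δ * p.1) (X p.1) ξ) * (starRingEnd ℂ) (h p.2 * osc γ ε2 (δ * p.2) (X p.2) ξ) with hΦ
  have hΦm : Measurable (Function.uncurry Φ) := by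
    have m1 : Measurable fun q : E3 × ℝ × ℝ => osc γ ε2 (δ * q.2.1) (X q.2.1) q.1 := hom.comp (f := fun q : E3 × ℝ × ℝ => (q.2.1, q.1)) (by fun_prop)
    have m2 : Measurable fun q : E3 × ℝ × ℝ => osc γ ε2 (δ * q.2.2) (X q.2.2) q.1 := hom.comp (f := fun q : E3 × ℝ × ℝ => (q.2.2, q.1)) (by fun_prop)
    have m3 : Measurable fun q : E3 × ℝ × ℝ => h q.2.1 := hm.comp (by fun_prop)
    have m4 : Measurable fun q : E3 × ℝ × ℝ => h q.2.2 := hm.comp (by fun_prop)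
    exact (m3.mul m1).mul (Complex.continuous_conj.measurable.comp (m4.mul m2))
  have hΦn : ∀ ξ p, ‖Φ ξ p‖ = ‖h p.1‖ * ‖h p.2‖ := by
    intro ξ p
    simp only [hΦ, norm_mul, RCLike.norm_conj, osc_norm, mul_one]
  have hΦi : Integrable (Function.uncurry Φ) ((volume.restrict S).prod (volume.prod volume)) := by
    have h1 : Integrable (fun p : ℝ × ℝ => ‖h p.1‖ * ‖h p.2‖) (volume.prod volume) := hi.norm.mul_prod hi.norm
    have h2 : Integrable (fun q : E3 × ℝ × ℝ => (1:ℝ) * (‖h q.2.1‖ * ‖h q.2.2‖)) ((volume.restrict S).prod (volume.prod volume)) :=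
      (integrable_const (1:ℝ)).mul_prod h1
    refine h2.mono' hΦm.aestronglyMeasurable (Eventually.of_forall ?_)
    rintro ⟨ξ, p⟩
    simp only [Function.uncurry, hΦn, one_mul, le_refl]
  have eB : ∀ ξ, ((‖B ξ‖ ^ 2 : ℝ) : ℂ) = ∫ p, Φ ξ p ∂(volume.prod volume) := by
    intro ξ
    simp only [hΦ]
    rw [integral_prod_mul (fun t => h t * osc γ ε2 (δ * t) (X t) ξ) (fun t => (starRingEnd ℂ) (h t * osc γ ε2 (δ * t) (X t) ξ)), integral_conj]
    rw [Complex.mul_conj, Complex.normSq_eq_norm_sq]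
  have hBi : Integrable (fun ξ => ∫ p, Φ ξ p ∂(volume.prod volume)) (volume.restrict S) := hΦi.integral_prod_left
  have hBi2 : Integrable (fun ξ => ‖B ξ‖ ^ 2) (volume.restrict S) := by
    have := hBi.re
    refine this.congr (Eventually.of_forall fun ξ => ?_)
    simp only [← eB]
    exact Complex.ofReal_re _
  have e1 : ∫⁻ ξ in S, ‖B ξ‖ₑ ^ 2 = ‖∫ ξ in S, ∫ p, Φ ξ p ∂(volume.prod volume)‖ₑ := by
    simp_rw [← eB]
    rw [integral_complex_ofReal, ← ofReal_norm, Complex.norm_real, Real.norm_of_nonneg (integral_nonneg fun _ => by positivity),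
      ofReal_integral_eq_lintegral_ofReal hBi2 (Eventually.of_forall fun _ => by positivity)]
    apply lintegral_congr
    intro ξ
    rw [ENNReal.ofReal_pow (norm_nonneg _), ofReal_norm]
  rw [e1, integral_integral_swap hΦi]
  refine (enorm_integral_le_lintegral_enorm _).trans ?_
  have e2 : ∀ p : ℝ × ℝ, ‖∫ ξ in S, Φ ξ p‖ₑ ≤ ENNReal.ofReal (κ * (1 / √|δ|)) * (‖h p.1‖ₑ * ‖h p.2‖ₑ * hk (p.1 - p.2)) := by
    intro p
    have : ∀ ξ, Φ ξ p = (h p.1 * (starRingEnd ℂ) (h p.2)) * osc γ ε2 (δ * (p.1 - p.2)) (X p.1 - X p.2) ξ := by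
      intro ξ
      simp only [hΦ]
      rw [mul_sub, ← osc_mul_conj, map_mul]; ring
    simp_rw [this]
    rw [integral_const_mul, enorm_mul, enorm_mul, RCLike.enorm_conj]
    calc _ ≤ ‖h p.1‖ₑ * ‖h p.2‖ₑ * (ENNReal.ofReal κ * hk (δ * (p.1 - p.2))) := by gcongr; exact hK _ _
      _ = _ := by
        rw [hk_scale _ _ hδ, ENNReal.ofReal_mul hκ]; ring
  refine (lintegral_mono e2).trans ?_
  have hmm : Measurable fun p : ℝ × ℝ => ‖h p.1‖ₑ * ‖h p.2‖ₑ * hk (p.1 - p.2) := by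
    have := hk_meas
    fun_prop
  rw [lintegral_const_mul _ hmm, lintegral_prod _ hmm.aemeasurable]
  have := hls (fun t => ‖h t‖₊) hm.nnnorm
  rw [ENNReal.ofReal_mul (p := 12) (by norm_num), mul_comm (ENNReal.ofReal 12), mul_assoc]
  gcongr
  rw [show ENNReal.ofReal 12 = 12 by norm_num]
  exact this


theorem absorb (J A : ℝ≥0∞) (hJ : J ≠ ⊤) (h : J ≤ A * J ^ (3/4 : ℝ)) : J ≤ A ^ 4 := by
  by_cases h0 : J = 0
  · rw [h0]; exact zero_le
  have h1 : J ^ (1/4 : ℝ) ≤ A := by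
    have e : J = J ^ (1/4 : ℝ) * J ^ (3/4 : ℝ) := by
      rw [← ENNReal.rpow_add _ _ h0 hJ]; norm_num
    rw [e] at h
    have hpos : J ^ (3/4 : ℝ) ≠ 0 := by simp [h0, hJ]
    have hfin : J ^ (3/4 : ℝ) ≠ ⊤ := by simp [h0, hJ]
    have h' : J ^ (1/4 : ℝ) * J ^ (3/4 : ℝ) ≤ A * J ^ (3/4 : ℝ) := by
      rw [← e] at h ⊢
      exact h
    exact (ENNReal.mul_le_mul_iff_left hpos hfin).1 h'
  calc J = (J ^ (1/4 : ℝ)) ^ 4 := by rw [← ENNReal.rpow_natCast, ← ENNReal.rpow_mul]; norm_num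
    _ ≤ A ^ 4 := by gcongr

theorem tt (γ ε2 δ R κ T : ℝ) (hδ : δ ≠ 0) (hκ : 0 ≤ κ) {ι : Type} [Fintype ι] (S : ι → Set E3)
    (hS : ∀ k, GoodSet γ ε2 R κ (S k)) (X : ℝ → E3) (hX : Measurable X) (G : E3 → ℂ) (hG : Measurable G) (hGi : Integrable G)
    (hGs : ∀ ξ, G ξ ≠ 0 → ∃ k, ξ ∈ S k) :
    ∫⁻ t in Set.Ioo 0 T, ‖∫ ξ, osc γ ε2 (δ * t) (X t) ξ * G ξ‖ₑ ^ 4 ≤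
      (eLpNorm G 2 volume * (ENNReal.ofReal (Fintype.card ι * (12 * (κ * (1 / √|δ|))))) ^ (1/2 : ℝ)) ^ 4 := by
  have hom := osc_meas2 γ ε2 δ X hX
  set v : ℝ → ℂ := fun t => ∫ ξ, osc γ ε2 (δ * t) (X t) ξ * G ξ with hv
  have hvm : Measurable v := by
    have : StronglyMeasurable (fun p : ℝ × E3 => osc γ ε2 (δ * p.1) (X p.1) p.2 * G p.2) :=
      (hom.mul (hG.comp measurable_snd)).stronglyMeasurable
    exact this.integral_prod_right'.measurable
  set M := ∫ ξ, ‖G ξ‖ with hM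
  have hvb : ∀ t, ‖v t‖ ≤ M := by
    intro t
    refine (norm_integral_le_integral_norm _).trans (le_of_eq ?_)
    simp only [norm_mul, osc_norm, one_mul, hM]
  have hM0 : 0 ≤ M := (norm_nonneg _).trans (hvb 0)
  set h : ℝ → ℂ := (Set.Ioo 0 T).indicator (fun t => (starRingEnd ℂ) (v t) * ((‖v t‖ ^ 2 : ℝ) : ℂ)) with hh
  have hhm : Measurable h := by
    refine Measurable.indicator ?_ measurableSet_Ioo
    exact (Complex.continuous_conj.measurable.comp hvm).mul (Complex.measurable_ofReal.comp (hvm.norm.pow_const 2))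
  have hhi : Integrable h := by
    rw [hh, integrable_indicator_iff measurableSet_Ioo]
    refine Measure.integrableOn_of_bounded (M := M * M ^ 2) (by simp) ?_ (Eventually.of_forall fun t => ?_)
    · exact ((Complex.continuous_conj.measurable.comp hvm).mul (Complex.measurable_ofReal.comp (hvm.norm.pow_const 2))).aestronglyMeasurable
    · rw [norm_mul, RCLike.norm_conj, Complex.norm_real, norm_pow, norm_norm]
      have := hvb t
      gcongr
  have hhe : ∀ t, ‖h t‖ₑ = (Set.Ioo 0 T).indicator (fun t => ‖v t‖ₑ ^ 3) t := by
    intro t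
    by_cases ht : t ∈ Set.Ioo 0 T
    · rw [hh, Set.indicator_of_mem ht, Set.indicator_of_mem ht, enorm_mul, RCLike.enorm_conj, ← ofReal_norm (((‖v t‖ ^ 2 : ℝ) : ℂ)), Complex.norm_real, norm_pow, norm_norm,
        ENNReal.ofReal_pow (norm_nonneg _), ofReal_norm]
      ring
    · rw [hh, Set.indicator_of_notMem ht, Set.indicator_of_notMem ht, enorm_zero]
  set J := ∫⁻ t in Set.Ioo 0 T, ‖v t‖ₑ ^ 4 with hJ
  have hJtop : J ≠ ⊤ := by
    have : J ≤ ∫⁻ t in Set.Ioo 0 T, ENNReal.ofReal M ^ 4 := by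
      apply lintegral_mono
      intro t
      have : ‖v t‖ₑ ≤ ENNReal.ofReal M := by rw [← ofReal_norm]; exact ENNReal.ofReal_le_ofReal (hvb t)
      exact pow_le_pow_left' this 4
    refine (this.trans_lt ?_).ne
    rw [setLIntegral_const]
    exact ENNReal.mul_lt_top (by simp) (by simp)
  have hJh : ∫⁻ t, ‖h t‖ₑ ^ (4/3 : ℝ) = J := by
    rw [hJ, ← lintegral_indicator measurableSet_Ioo]
    apply lintegral_congr
    intro t
    rw [hhe]
    by_cases ht : t ∈ Set.Ioo 0 T
    · rw [Set.indicator_of_mem ht, Set.indicator_of_mem ht, ← ENNReal.rpow_natCast, ← ENNReal.rpow_mul, ← ENNReal.rpow_natCast]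
      norm_num
    · rw [Set.indicator_of_notMem ht, Set.indicator_of_notMem ht]; norm_num
  set B : E3 → ℂ := fun ξ => ∫ t, h t * osc γ ε2 (δ * t) (X t) ξ with hB
  have hBm : Measurable B := by
    have : StronglyMeasurable (fun p : E3 × ℝ => h p.2 * osc γ ε2 (δ * p.2) (X p.2) p.1) :=
      ((hhm.comp measurable_snd).mul (hom.comp (f := fun p : E3 × ℝ => (p.2, p.1)) (by fun_prop))).stronglyMeasurable
    exact this.integral_prod_right'.measurable
  -- duality
  have hFi : Integrable (Function.uncurry fun (t : ℝ) (ξ : E3) => h t * (osc γ ε2 (δ * t) (X t) ξ * G ξ)) (volume.prod volume) := by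
    refine (hhi.norm.mul_prod hGi.norm).mono' ?_ (Eventually.of_forall ?_)
    · exact ((hhm.comp measurable_fst).mul (hom.mul (hG.comp measurable_snd))).aestronglyMeasurable
    · rintro ⟨t, ξ⟩
      simp [Function.uncurry, osc_norm]
  have hdual : ∫ t, h t * v t = ∫ ξ, B ξ * G ξ := by
    simp only [hv, hB]
    simp_rw [← integral_const_mul, ← integral_mul_const]
    rw [integral_integral_swap hFi]
    simp_rw [mul_assoc]
  have hJd : J = ‖∫ t, h t * v t‖ₑ := by
    have e : ∀ t, h t * v t = (((Set.Ioo 0 T).indicator (fun t => ‖v t‖ ^ 4) t : ℝ) : ℂ) := by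
      intro t
      by_cases ht : t ∈ Set.Ioo 0 T
      · rw [hh, Set.indicator_of_mem ht, Set.indicator_of_mem ht, mul_right_comm, mul_comm _ (v t), Complex.mul_conj, Complex.normSq_eq_norm_sq]
        push_cast; ring
      · rw [hh, Set.indicator_of_notMem ht, Set.indicator_of_notMem ht]; simp
    simp_rw [e]
    rw [integral_complex_ofReal, ← ofReal_norm, Complex.norm_real, integral_indicator measurableSet_Ioo,
      Real.norm_of_nonneg (integral_nonneg fun _ => by positivity), ofReal_integral_eq_lintegral_ofReal]
    · apply lintegral_congr
      intro t
      rw [ENNReal.ofReal_pow (norm_nonneg _), ofReal_norm]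
    · refine Measure.integrableOn_of_bounded (M := M ^ 4) (by simp) (hvm.norm.pow_const 4).aestronglyMeasurable (Eventually.of_forall fun t => ?_)
      rw [norm_pow, norm_norm]
      have := hvb t
      gcongr
    · exact Eventually.of_forall fun _ => by positivity
  set U : Set E3 := ⋃ k, S k with hU
  have hUm : MeasurableSet U := MeasurableSet.iUnion fun k => (hS k).1
  have hBU : ∫⁻ ξ in U, ‖B ξ‖ₑ ^ 2 ≤ ENNReal.ofReal (Fintype.card ι * (12 * (κ * (1 / √|δ|)))) * J ^ (3/2 : ℝ) := by
    calc ∫⁻ ξ in U, ‖B ξ‖ₑ ^ 2 ≤ ∑' k, ∫⁻ ξ in S k, ‖B ξ‖ₑ ^ 2 := lintegral_iUnion_le _ _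
      _ = ∑ k, ∫⁻ ξ in S k, ‖B ξ‖ₑ ^ 2 := tsum_fintype _
      _ ≤ ∑ k : ι, ENNReal.ofReal (12 * (κ * (1 / √|δ|))) * J ^ (3/2 : ℝ) := by
        apply Finset.sum_le_sum
        intro k _
        have := tt_B γ ε2 δ R κ hδ hκ (S k) (hS k) X hX h hhm hhi
        rw [hJh] at this
        exact this
      _ = _ := by
        rw [Finset.sum_const, Finset.card_univ, nsmul_eq_mul, ENNReal.ofReal_mul (p := (Fintype.card ι : ℝ)) (by positivity), ENNReal.ofReal_natCast, mul_assoc]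
  set W := ENNReal.ofReal (Fintype.card ι * (12 * (κ * (1 / √|δ|)))) with hW
  have hfinal : J ≤ (eLpNorm G 2 volume * W ^ (1/2 : ℝ)) * J ^ (3/4 : ℝ) := by
    calc J = ‖∫ ξ, B ξ * G ξ‖ₑ := by rw [hJd, hdual]
      _ ≤ ∫⁻ ξ, ‖B ξ * G ξ‖ₑ := enorm_integral_le_lintegral_enorm _
      _ = ∫⁻ ξ, ((fun ξ => ‖G ξ‖ₑ) * (U.indicator fun ξ => ‖B ξ‖ₑ)) ξ := by
        apply lintegral_congr
        intro ξ
        by_cases hξ : G ξ = 0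
        · simp [hξ]
        · have : ξ ∈ U := Set.mem_iUnion.2 (hGs ξ hξ)
          rw [Pi.mul_apply, Set.indicator_of_mem this, enorm_mul, mul_comm]
      _ ≤ (∫⁻ ξ, ‖G ξ‖ₑ ^ (2:ℝ)) ^ (1/2 : ℝ) * (∫⁻ ξ, (U.indicator fun ξ => ‖B ξ‖ₑ) ξ ^ (2:ℝ)) ^ (1/2 : ℝ) :=
        ENNReal.lintegral_mul_le_Lp_mul_Lq volume Real.HolderConjugate.two_two hG.enorm.aemeasurable (hBm.enorm.indicator hUm).aemeasurable
      _ ≤ eLpNorm G 2 volume * (W * J ^ (3/2 : ℝ)) ^ (1/2 : ℝ) := by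
        gcongr
        · rw [eLpNorm_eq_lintegral_rpow_enorm_toReal (by norm_num) (by norm_num)]; simp
        · refine le_trans (le_of_eq ?_) hBU
          rw [← lintegral_indicator hUm]
          apply lintegral_congr
          intro ξ
          by_cases hξ : ξ ∈ U
          · rw [Set.indicator_of_mem hξ, Set.indicator_of_mem hξ]; norm_num
          · rw [Set.indicator_of_notMem hξ, Set.indicator_of_notMem hξ]; norm_num
      _ = _ := by
        rw [ENNReal.mul_rpow_of_nonneg _ _ (by norm_num), ← ENNReal.rpow_mul, ← mul_assoc]
        norm_num
  exact absorb J _ hJtop hfinal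


def uu (γ ε2 δ : ℝ) (G : E3 → ℂ) (t : ℝ) (x : E3) : ℂ := ∫ ξ, osc γ ε2 (δ * t) x ξ * G ξ

theorem uu_meas (γ ε2 δ : ℝ) (G : E3 → ℂ) (hG : Measurable G) : Measurable (fun p : ℝ × E3 => uu γ ε2 δ G p.1 p.2) := by
  have : StronglyMeasurable (fun p : (ℝ × E3) × E3 => osc γ ε2 (δ * p.1.1) p.1.2 p.2 * G p.2) := by
    have h := (osc_cont γ ε2).measurable
    have h2 := h.comp (g := fun p : ℝ × E3 × E3 => osc γ ε2 p.1 p.2.1 p.2.2) (f := fun p : (ℝ × E3) × E3 => (δ * p.1.1, p.1.2, p.2)) (by fun_prop)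
    exact (h2.mul (hG.comp measurable_snd)).stronglyMeasurable
  exact this.integral_prod_right'.measurable

/-- measurable running argmax -/
def amax (W : ℝ → E3 → ℝ≥0∞) (d : ℕ → E3) : ℕ → ℝ → E3
  | 0 => fun _ => d 0
  | n + 1 => fun t => open Classical in if W t (amax W d n t) < W t (d (n + 1)) then d (n + 1) else amax W d n t

theorem amax_meas (W : ℝ → E3 → ℝ≥0∞) (hW : Measurable fun p : ℝ × E3 => W p.1 p.2) (d : ℕ → E3) (n : ℕ) : Measurable (amax W d n) := by
  induction n with
  | zero => exact measurable_const
  | succ n ih =>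
    simp only [amax]
    refine Measurable.ite ?_ measurable_const ih
    apply measurableSet_lt
    · exact hW.comp (measurable_id.prodMk ih)
    · exact hW.comp (measurable_id.prodMk measurable_const)

theorem amax_succ (W : ℝ → E3 → ℝ≥0∞) (d : ℕ → E3) (n : ℕ) (t : ℝ) :
    W t (amax W d n t) ≤ W t (amax W d (n + 1) t) ∧ W t (d (n + 1)) ≤ W t (amax W d (n + 1) t) := by
  simp only [amax]
  split_ifs with h
  · exact ⟨h.le, le_rfl⟩
  · exact ⟨le_rfl, not_lt.1 h⟩

theorem amax_mono (W : ℝ → E3 → ℝ≥0∞) (d : ℕ → E3) (t : ℝ) : Monotone fun n => W t (amax W d n t) :=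
  monotone_nat_of_le_succ fun n => (amax_succ W d n t).1

theorem amax_ge (W : ℝ → E3 → ℝ≥0∞) (d : ℕ → E3) (n : ℕ) (t : ℝ) : W t (d n) ≤ W t (amax W d n t) := by
  cases n with
  | zero => exact le_rfl
  | succ n => exact (amax_succ W d n t).2

theorem max_lint (W : ℝ → E3 → ℝ≥0∞) (hW : Measurable fun p : ℝ × E3 => W p.1 p.2) (d : ℕ → E3) (K : ℝ≥0∞)
    (h : ∀ (X : ℝ → E3) (T : ℝ), Measurable X → ∫⁻ t in Set.Ioo 0 T, W t (X t) ^ 4 ≤ K) :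
    ∫⁻ t in Set.Ioi 0, (⨆ n, W t (d n)) ^ 4 ≤ K := by
  have h2 : ∀ X : ℝ → E3, Measurable X → ∫⁻ t in Set.Ioi 0, W t (X t) ^ 4 ≤ K := by
    intro X hX
    have e : Set.Ioi (0:ℝ) = ⋃ n : ℕ, Set.Ioo (0:ℝ) n := by
      ext t
      simp only [Set.mem_Ioi, Set.mem_iUnion, Set.mem_Ioo]
      constructor
      · intro ht
        obtain ⟨n, hn⟩ := exists_nat_gt t
        exact ⟨n, ht, hn⟩
      · rintro ⟨n, h1, _⟩; exact h1
    rw [e, setLIntegral_iUnion_of_directed]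
    · exact iSup_le fun n => h X n hX
    · apply Monotone.directed_le
      intro a b hab
      exact Set.Ioo_subset_Ioo_right (by exact_mod_cast hab)
  have hm := fun n => amax_meas W hW d n
  calc ∫⁻ t in Set.Ioi 0, (⨆ n, W t (d n)) ^ 4 ≤ ∫⁻ t in Set.Ioi 0, ⨆ n, W t (amax W d n t) ^ 4 := by
        apply lintegral_mono
        intro t
        have e : ∀ g : ℕ → ℝ≥0∞, (⨆ n, g n) ^ 4 = ⨆ n, g n ^ 4 := by
          intro g
          have := (ENNReal.orderIsoRpow 4 (by norm_num)).map_iSup g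
          simp only [ENNReal.orderIsoRpow_apply] at this
          simpa using this
        simp only [e]
        exact iSup_mono fun n => pow_le_pow_left' (amax_ge W d n t) 4
    _ = ⨆ n, ∫⁻ t in Set.Ioi 0, W t (amax W d n t) ^ 4 := by
        apply lintegral_iSup
        · intro n
          exact (hW.comp (measurable_id.prodMk (hm n))).pow_const 4
        · intro a b hab t
          exact pow_le_pow_left' (amax_mono W d t hab) 4
    _ ≤ K := iSup_le fun n => h2 _ (hm n)

theorem uu_cont (γ ε2 δ : ℝ) (G : E3 → ℂ) (hGi : Integrable G) (t : ℝ) : Continuous (uu γ ε2 δ G t) := by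
  unfold uu
  have hc := osc_cont γ ε2
  refine continuous_of_dominated (bound := fun ξ => ‖G ξ‖) ?_ ?_ hGi.norm ?_
  · intro x
    refine AEStronglyMeasurable.mul ?_ hGi.aestronglyMeasurable
    exact (hc.comp (f := fun ξ : E3 => (δ * t, x, ξ)) (by fun_prop)).aestronglyMeasurable
  · intro x
    exact Eventually.of_forall fun ξ => by rw [norm_mul, osc_norm, one_mul]
  · refine Eventually.of_forall fun ξ => ?_
    exact (hc.comp (f := fun x : E3 => (δ * t, x, ξ)) (by fun_prop)).mul continuous_const

theorem sup_dense (w : E3 → ℂ) (hw : Continuous w) (x : E3) : ‖w x‖ₑ ≤ ⨆ n, ‖w (TopologicalSpace.denseSeq E3 n)‖ₑ := by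
  have hcl : IsClosed {x | ‖w x‖ₑ ≤ ⨆ n, ‖w (TopologicalSpace.denseSeq E3 n)‖ₑ} := isClosed_le hw.enorm continuous_const
  have hd := TopologicalSpace.denseRange_denseSeq E3
  exact hd.induction_on (p := fun x => ‖w x‖ₑ ≤ ⨆ n, ‖w (TopologicalSpace.denseSeq E3 n)‖ₑ) x hcl (fun n => le_iSup (fun n => ‖w (TopologicalSpace.denseSeq E3 n)‖ₑ) n)

def MM (γ ε2 δ : ℝ) (G : E3 → ℂ) (t : ℝ) : ℝ≥0∞ := ⨆ n, ‖uu γ ε2 δ G t (TopologicalSpace.denseSeq E3 n)‖ₑ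

theorem MM_bound (γ ε2 δ R κ : ℝ) (hδ : δ ≠ 0) (hκ : 0 ≤ κ) {ι : Type} [Fintype ι] (S : ι → Set E3)
    (hS : ∀ k, GoodSet γ ε2 R κ (S k)) (G : E3 → ℂ) (hG : Measurable G) (hGi : Integrable G)
    (hGs : ∀ ξ, G ξ ≠ 0 → ∃ k, ξ ∈ S k) :
    ∫⁻ t in Set.Ioi 0, MM γ ε2 δ G t ^ 4 ≤
      (eLpNorm G 2 volume * (ENNReal.ofReal (Fintype.card ι * (12 * (κ * (1 / √|δ|))))) ^ (1/2 : ℝ)) ^ 4 := by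
  apply max_lint (fun t x => ‖uu γ ε2 δ G t x‖ₑ) (uu_meas γ ε2 δ G hG).enorm
  intro X T hX
  exact tt γ ε2 δ R κ T hδ hκ S hS X hX G hG hGi hGs


theorem interp (u : E3 → ℂ) (q : ℝ≥0∞) (hq : 2 ≤ q) (M : ℝ≥0∞) (hM : M ≠ ⊤) (hu : ∀ x, ‖u x‖ₑ ≤ M) :
    eLpNorm u q volume ≤ eLpNorm u 2 volume ^ (2 / q.toReal) * M ^ (1 - 2 / q.toReal) := by
  by_cases hqt : q = ⊤
  · subst hqt
    have e0 : (2:ℝ) / (⊤:ℝ≥0∞).toReal = 0 := by simp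
    rw [e0, ENNReal.rpow_zero, _root_.sub_zero, ENNReal.rpow_one, one_mul, eLpNorm_exponent_top]
    exact essSup_le_of_ae_le _ (Eventually.of_forall hu)
  have hq0 : q ≠ 0 := by rintro rfl; simp at hq
  have hQ2 : 2 ≤ q.toReal := by
    have := ENNReal.toReal_mono hqt hq
    simpa using this
  rw [eLpNorm_eq_lintegral_rpow_enorm_toReal hq0 hqt, eLpNorm_eq_lintegral_rpow_enorm_toReal (by norm_num) (by norm_num)]
  set Q := q.toReal with hQ
  have hQ0 : 0 < Q := by linarith
  have h1 : ∫⁻ x, ‖u x‖ₑ ^ Q ≤ M ^ (Q - 2) * ∫⁻ x, ‖u x‖ₑ ^ (2:ℝ) := by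
    rw [← lintegral_const_mul' _ _ (ENNReal.rpow_ne_top_of_nonneg (by linarith) hM)]
    apply lintegral_mono
    intro x
    have e : ‖u x‖ₑ ^ Q = ‖u x‖ₑ ^ (Q - 2) * ‖u x‖ₑ ^ (2:ℝ) := by
      rw [← ENNReal.rpow_add_of_nonneg _ _ (by linarith) (by norm_num)]; congr 1; ring
    simp only [e]
    gcongr
    exact hu x
  calc (∫⁻ x, ‖u x‖ₑ ^ Q) ^ (1 / Q) ≤ (M ^ (Q - 2) * ∫⁻ x, ‖u x‖ₑ ^ (2:ℝ)) ^ (1 / Q) := by gcongr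
    _ = _ := by
      rw [ENNReal.mul_rpow_of_nonneg _ _ (by positivity), ← ENNReal.rpow_mul, ← ENNReal.rpow_mul, mul_comm]
      congr 2
      · simp; field_simp
      · field_simp

theorem final_enn (u : ℝ → E3 → ℂ) (M : ℝ → ℝ≥0∞) (F a b : ℝ≥0∞) (hF : F ≠ ⊤) (ha : a ≠ ⊤) 
    (h2 : ∀ t, eLpNorm (u t) 2 volume ≤ F) (hM : ∀ t x, ‖u t x‖ₑ ≤ M t) (hMa : ∀ t, M t ≤ F * a)
    (hM4 : ∫⁻ t in Set.Ioi 0, M t ^ 4 ≤ (F * b) ^ 4) (p q : ℝ≥0∞) (hq : 2 ≤ q)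
    (hp : p = ⊤ ∨ (p ≠ 0 ∧ 4 ≤ (1 - 2 / q.toReal) * p.toReal)) :
    eLpNorm (fun t => (eLpNorm (u t) q volume).toReal) p (volume.restrict (Set.Ioi (0:ℝ))) ≤
      F * (a ^ ((1 - 2 / q.toReal) - 4 / p.toReal) * b ^ (4 / p.toReal)) := by
  have hFa : F * a ≠ ⊤ := ENNReal.mul_ne_top hF ha
  have hMt : ∀ t, M t ≠ ⊤ := fun t => ((hMa t).trans_lt hFa.lt_top).ne
  set θ := 2 / q.toReal with hθ
  have hθ0 : 0 ≤ θ := by positivity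
  have hθ1 : 0 ≤ 1 - θ := by
    by_cases hqt : q = ⊤
    · rw [hθ, hqt]; simp
    have hQ2 : 2 ≤ q.toReal := by
      have := ENNReal.toReal_mono hqt hq
      simpa using this
    rw [hθ, sub_nonneg, div_le_one (by linarith)]; exact hQ2
  have hN : ∀ t, ‖(eLpNorm (u t) q volume).toReal‖ₑ ≤ F ^ θ * M t ^ (1 - θ) := by
    intro t
    rw [Real.enorm_eq_ofReal ENNReal.toReal_nonneg]
    refine ENNReal.ofReal_toReal_le.trans ((interp (u t) q hq (M t) (hMt t) (hM t)).trans ?_)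
    gcongr
    exact h2 t
  rcases hp with rfl | ⟨hp0, hp4⟩
  · have e0 : (4:ℝ) / (⊤:ℝ≥0∞).toReal = 0 := by simp
    rw [e0, ENNReal.rpow_zero, _root_.sub_zero, mul_one, eLpNorm_exponent_top]
    refine essSup_le_of_ae_le _ (Eventually.of_forall fun t => ?_)
    calc _ ≤ F ^ θ * M t ^ (1 - θ) := hN t
      _ ≤ F ^ θ * (F * a) ^ (1 - θ) := by gcongr; exact hMa t
      _ = F * a ^ (1 - θ) := by
        rw [ENNReal.mul_rpow_of_nonneg _ _ hθ1, ← mul_assoc, ← ENNReal.rpow_add_of_nonneg _ _ hθ0 hθ1]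
        simp
  · have hpt : p ≠ ⊤ := by rintro rfl; simp at hp4; linarith
    set P := p.toReal with hP
    have hP0 : 0 < P := ENNReal.toReal_pos hp0 hpt
    rw [eLpNorm_eq_lintegral_rpow_enorm_toReal hp0 hpt, ← hP]
    have e0 : 0 ≤ (1 - θ) * P - 4 := by linarith
    have h1 : ∫⁻ t in Set.Ioi 0, ‖(eLpNorm (u t) q volume).toReal‖ₑ ^ P ≤ F ^ (θ * P) * (F * a) ^ ((1 - θ) * P - 4) * (F * b) ^ 4 := by
      refine le_trans ?_ (mul_le_mul_right hM4 _)
      rw [← lintegral_const_mul' _ _ (ENNReal.mul_ne_top (ENNReal.rpow_ne_top_of_nonneg (by positivity) hF) (ENNReal.rpow_ne_top_of_nonneg e0 hFa))]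
      apply lintegral_mono
      intro t
      calc _ ≤ (F ^ θ * M t ^ (1 - θ)) ^ P := by
            have := hN t
            exact ENNReal.rpow_le_rpow this hP0.le
        _ = F ^ (θ * P) * (M t ^ ((1 - θ) * P - 4) * M t ^ 4) := by
            rw [ENNReal.mul_rpow_of_nonneg _ _ hP0.le, ← ENNReal.rpow_mul, ← ENNReal.rpow_mul, ← ENNReal.rpow_natCast (M t) 4,
              ← ENNReal.rpow_add_of_nonneg _ _ e0 (by norm_num)]
            congr 2; push_cast; ring
        _ ≤ F ^ (θ * P) * ((F * a) ^ ((1 - θ) * P - 4) * M t ^ 4) := by gcongr; exact hMa t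
        _ = _ := by simp only [mul_assoc]
    have e1 : 0 ≤ 1 / P := by positivity
    calc _ ≤ (F ^ (θ * P) * (F * a) ^ ((1 - θ) * P - 4) * (F * b) ^ 4) ^ (1 / P) := ENNReal.rpow_le_rpow h1 e1
      _ = (F ^ P * (a ^ ((1 - θ) * P - 4) * b ^ (4:ℝ))) ^ (1 / P) := by
        congr 1
        rw [← ENNReal.rpow_natCast (F * b) 4, ENNReal.mul_rpow_of_nonneg F a e0, ENNReal.mul_rpow_of_nonneg F b (by norm_num)]
        have : F ^ P = F ^ (θ * P) * F ^ ((1 - θ) * P - 4) * F ^ (4:ℝ) := by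
          rw [← ENNReal.rpow_add_of_nonneg _ _ (by positivity) e0, ← ENNReal.rpow_add_of_nonneg _ _ (by nlinarith) (by norm_num)]
          congr 1; ring
        rw [this]; push_cast; ring
      _ = _ := by
        rw [ENNReal.mul_rpow_of_nonneg _ _ e1, ENNReal.mul_rpow_of_nonneg _ _ e1, ← ENNReal.rpow_mul, ← ENNReal.rpow_mul, ← ENNReal.rpow_mul]
        congr 1
        · rw [mul_one_div_cancel hP0.ne', ENNReal.rpow_one]
        · congr 2 <;> field_simp


theorem psi_bd (ψ : ℝ → ℝ) (hψ : IsCutoff ψ) (r R : ℝ) (ξ : E3) : 0 ≤ Psi ψ r R ξ ∧ Psi ψ r R ξ ≤ 1 := by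
  obtain ⟨-, h, -, -⟩ := hψ
  unfold Psi
  have h1 := h (‖ξ‖ / R)
  have h2 := h (xih ξ / r)
  have h3 := h (|ξ 2| / r)
  rw [Set.mem_Icc] at h1 h2 h3
  have a := mul_nonneg (sub_nonneg.2 h2.2) (sub_nonneg.2 h3.2)
  have b : (1 - ψ (xih ξ / r)) * (1 - ψ (|ξ 2| / r)) ≤ 1 := mul_le_one₀ (by linarith) (by linarith) (by linarith)
  exact ⟨mul_nonneg h1.1 a, mul_le_one₀ h1.2 a b⟩

theorem psi_supp (ψ : ℝ → ℝ) (hψ : IsCutoff ψ) (r R : ℝ) (hr : 0 < r) (hR : 0 < R) (ξ : E3) (h : Psi ψ r R ξ ≠ 0) :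
    r ≤ xih ξ ∧ r ≤ |ξ 2| ∧ ‖ξ‖ ≤ 2 * R := by
  obtain ⟨-, -, h1, h2⟩ := hψ
  refine ⟨?_, ?_, ?_⟩
  · by_contra hc
    push Not at hc
    apply h
    unfold Psi
    rw [h1 (xih ξ / r) ((div_le_one hr).2 hc.le)]; ring
  · by_contra hc
    push Not at hc
    apply h
    unfold Psi
    rw [h1 (|ξ 2| / r) ((div_le_one hr).2 hc.le)]; ring
  · by_contra hc
    push Not at hc
    apply h
    unfold Psi
    rw [h2 (‖ξ‖ / R) ((le_div_iff₀ hR).2 hc.le)]; ring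

theorem psi_cont (ψ : ℝ → ℝ) (hψ : IsCutoff ψ) (r R : ℝ) : Continuous (Psi ψ r R) := by
  have h := hψ.1.continuous
  have hx := xih_cont
  unfold Psi
  fun_prop

theorem FT_zero (f : E3 → ℂ) (h : ¬ Integrable f) : FT f = 0 := by
  funext ξ
  unfold FT
  rw [Real.fourier_eq]
  apply integral_undef
  rw [Real.fourierIntegral_convergent_iff]
  exact h

theorem PsiG_eq (ψ : ℝ → ℝ) (r R γ ε1 ε2 ε t : ℝ) (f : E3 → ℂ) :
    PsiG ψ r R γ ε1 ε2 ε t f = uu γ ε2 (ε1 / ε) (fun ξ => (Psi ψ r R ξ : ℂ) * FT f ξ) t := by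
  funext x
  unfold PsiG uu FTinv
  rw [Real.fourierInv_eq']
  congr 1
  funext ξ
  have : osc γ ε2 (ε1 / ε * t) x ξ = cexp (↑(2 * π * inner ℝ ξ x) * I) * cexp (((t / ε : ℝ) : ℂ) * lamEV γ ε1 ε2 ξ) := by
    unfold osc lamEV phs
    rw [← Complex.exp_add]
    congr 1
    push_cast
    ring
  rw [this, smul_eq_mul]
  ring

theorem hp_conv (p q : ℝ≥0∞)
    (hpq : (p = ⊤ ∧ q = 2) ∨
      (2 < q ∧ ENNReal.ofReal (4 * q.toReal / (q.toReal - 2)) ≤ p ∧ (q = ⊤ → 4 ≤ p))) :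
    2 ≤ q ∧ (p = ⊤ ∨ (p ≠ 0 ∧ 4 ≤ (1 - 2 / q.toReal) * p.toReal)) := by
  rcases hpq with ⟨h1, h2⟩ | ⟨h1, h2, h3⟩
  · exact ⟨h2.ge, Or.inl h1⟩
  refine ⟨h1.le, ?_⟩
  by_cases hp : p = ⊤
  · exact Or.inl hp
  right
  by_cases hq : q = ⊤
  · have h4 := h3 hq
    refine ⟨?_, ?_⟩
    · rintro rfl; simp at h4
    · have := ENNReal.toReal_mono hp h4
      subst hq
      simpa using this
  · have hQ : 2 < q.toReal := by
      have := (ENNReal.toReal_lt_toReal (by norm_num) hq).2 h1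
      simpa using this
    have hpos : 0 < 4 * q.toReal / (q.toReal - 2) := div_pos (by linarith) (by linarith)
    have h4 := (ENNReal.ofReal_le_iff_le_toReal hp).1 h2
    refine ⟨?_, ?_⟩
    · rintro rfl; simp at h4; linarith
    · rw [div_le_iff₀ (by linarith)] at h4
      have : (1 - 2 / q.toReal) * p.toReal = p.toReal * (q.toReal - 2) / q.toReal := by
        have : q.toReal ≠ 0 := by linarith
        field_simp
      rw [this, le_div_iff₀ (by linarith)]
      exact h4

theorem const_eq (c0 c1 R r ε s P : ℝ) (h0 : 0 < c0) (h1 : 0 < c1) (hR : 0 < R) (hr : 0 < r) (hε : 0 < ε) :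
    (c0 * R ^ (3/2:ℝ)) ^ ((1 - 2 / s) - 4 / P) * (c1 * R ^ (3/2:ℝ) * r⁻¹ * ε ^ (1/4:ℝ)) ^ (4 / P) =
    (c0 ^ ((1 - 2 / s) - 4 / P) * c1 ^ (4 / P)) * R ^ ((3:ℝ)/2 - 3 / s) * r ^ (-(4:ℝ) / P) * ε ^ (1 / P) := by
  rw [Real.mul_rpow h0.le (by positivity), Real.mul_rpow (by positivity) (by positivity), Real.mul_rpow (by positivity) (by positivity),
    Real.mul_rpow h1.le (by positivity), ← Real.rpow_mul hR.le, ← Real.rpow_mul hR.le, ← Real.rpow_mul hε.le, ← Real.rpow_neg_one r, ← Real.rpow_mul hr.le]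
  have e1 : (3:ℝ)/2 - 3 / s = 3/2 * ((1 - 2 / s) - 4 / P) + 3/2 * (4 / P) := by ring
  rw [e1, Real.rpow_add hR]
  have e2 : -1 * (4 / P) = -4 / P := by ring
  have e3 : 1 / 4 * (4 / P) = 1 / P := by ring
  rw [e2, e3]; ring

theorem cs_ball (G : E3 → ℂ) (hG : AEStronglyMeasurable G volume) (R : ℝ) (hR : 0 < R) (hs : ∀ ξ, G ξ ≠ 0 → ‖ξ‖ ≤ 2 * R) :
    ∫⁻ ξ, ‖G ξ‖ₑ ≤ eLpNorm G 2 volume * ENNReal.ofReal (√(8 * (volume (Metric.ball (0:E3) 1)).toReal) * R ^ (3/2:ℝ)) := by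
  have hV : volume (Metric.ball (0:E3) 1) ≠ ⊤ := measure_ball_lt_top.ne
  set V := (volume (Metric.ball (0:E3) 1)).toReal with hVd
  have hV0 : 0 ≤ V := ENNReal.toReal_nonneg
  have h1 : ∫⁻ ξ, ‖G ξ‖ₑ = ∫⁻ ξ in Metric.closedBall 0 (2 * R), ‖G ξ‖ₑ := by
    rw [← lintegral_indicator measurableSet_closedBall]
    congr 1; funext ξ
    by_cases h : ξ ∈ Metric.closedBall (0:E3) (2 * R)
    · rw [Set.indicator_of_mem h]
    · rw [Set.indicator_of_notMem h]
      have : G ξ = 0 := by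
        by_contra hc
        exact h (by simpa using hs ξ hc)
      simp [this]
  have h2 := eLpNorm_le_eLpNorm_mul_rpow_measure_univ (p := 1) (q := 2) (by norm_num) (hG.restrict (s := Metric.closedBall 0 (2 * R)))
  rw [eLpNorm_one_eq_lintegral_enorm, ← h1, Measure.restrict_apply_univ] at h2
  refine h2.trans ?_
  gcongr ?_ * ?_
  · exact eLpNorm_mono_measure _ Measure.restrict_le_self
  · rw [Measure.addHaar_closedBall _ _ (by positivity), ← ENNReal.ofReal_toReal hV, ← hVd, ← ENNReal.ofReal_mul (by positivity),
      ENNReal.ofReal_rpow_of_nonneg (by positivity) (by norm_num)]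
    apply ENNReal.ofReal_le_ofReal
    apply le_of_eq
    rw [Real.sqrt_eq_rpow]
    have : R ^ (3/2:ℝ) = (R ^ (3:ℕ)) ^ (1/2:ℝ) := by
      rw [← Real.rpow_natCast, ← Real.rpow_mul hR.le]; norm_num
    rw [this, ← Real.mul_rpow (by positivity) (by positivity)]
    simp
    norm_num
    congr 1; ring

theorem strichartz_scalar' (γ : ℝ) (hγ : 0 < γ) (ψ : ℝ → ℝ) (hψ : IsCutoff ψ)
    (p q : ℝ≥0∞)
    (hpq : (p = ⊤ ∧ q = 2) ∨
      (2 < q ∧ ENNReal.ofReal (4 * q.toReal / (q.toReal - 2)) ≤ p ∧ (q = ⊤ → 4 ≤ p))) :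
    ∃ C : ℝ, 0 < C ∧
      ∀ ε1 ε2 : ℝ, (ε1 = 1 ∨ ε1 = -1) → (ε2 = 1 ∨ ε2 = -1) →
      ∀ r R ε : ℝ, 0 < r → r ≤ 1 → 1 ≤ R → 0 < ε →
      ∀ f : E3 → ℂ, MemLp f 2 volume →
        eLpNorm (fun t => (eLpNorm (PsiG ψ r R γ ε1 ε2 ε t f) q volume).toReal) p
            (volume.restrict (Set.Ioi (0:ℝ))) ≤
          ENNReal.ofReal (C * R ^ ((3:ℝ)/2 - 3 / q.toReal) * r ^ (-(4:ℝ) / p.toReal) *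
              ε ^ (1 / p.toReal)) * eLpNorm f 2 volume := by
  obtain ⟨C0, hC0, hgood⟩ := pieces_good γ hγ
  obtain ⟨hq, hp⟩ := hp_conv p q hpq
  have hV0 : 0 < (volume (Metric.ball (0:E3) 1)).toReal :=
    ENNReal.toReal_pos (Metric.measure_ball_pos _ _ one_pos).ne' measure_ball_lt_top.ne
  set c0 := √(8 * (volume (Metric.ball (0:E3) 1)).toReal) with hc0d
  have hc0 : 0 < c0 := Real.sqrt_pos.2 (by positivity)
  set c1 := √(144 * C0) with hc1d
  have hc1 : 0 < c1 := Real.sqrt_pos.2 (by positivity)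
  refine ⟨c0 ^ ((1 - 2 / q.toReal) - 4 / p.toReal) * c1 ^ (4 / p.toReal), by positivity, ?_⟩
  intro ε1 ε2 hε1 hε2 r R ε hr hr1 hR hε f hf
  have hR0 : 0 < R := by linarith
  have hF : eLpNorm f 2 volume ≠ ⊤ := hf.2.ne
  rw [← const_eq c0 c1 R r ε q.toReal p.toReal hc0 hc1 hR0 hr hε, mul_comm, ENNReal.ofReal_mul (by positivity),
    ← ENNReal.ofReal_rpow_of_pos (by positivity), ← ENNReal.ofReal_rpow_of_pos (by positivity)]
  set G : E3 → ℂ := fun ξ => (Psi ψ r R ξ : ℂ) * FT f ξ with hGd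
  simp_rw [PsiG_eq]
  by_cases hfi : Integrable f
  swap
  · have hG0 : G = 0 := by rw [hGd, FT_zero f hfi]; funext ξ; simp
    have hu0 : ∀ t, uu γ ε2 (ε1 / ε) G t = 0 := by intro t; rw [hG0]; funext x; simp [uu]
    simp only [← hGd, hu0]
    simp
  have hFc : Continuous (FT f) := VectorFourier.fourierIntegral_continuous
    Real.continuous_fourierChar (by exact continuous_inner) hfi
  have hGc : Continuous G := (Complex.continuous_ofReal.comp (psi_cont ψ hψ r R)).mul hFc
  have hGs : ∀ ξ, G ξ ≠ 0 → r ≤ xih ξ ∧ r ≤ |ξ 2| ∧ ‖ξ‖ ≤ 2 * R := by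
    intro ξ h
    apply psi_supp ψ hψ r R hr hR0
    intro h0
    apply h
    simp [hGd, h0]
  have hGcs : HasCompactSupport G := by
    refine HasCompactSupport.intro (isCompact_closedBall (0:E3) (2 * R)) fun ξ h => ?_
    by_contra hc
    exact h (by simpa using (hGs ξ hc).2.2)
  have hGi : Integrable G := hGc.integrable_of_hasCompactSupport hGcs
  have hG2 : eLpNorm G 2 volume ≤ eLpNorm f 2 volume := by
    rw [← planch f hfi hf]
    refine eLpNorm_mono fun ξ => ?_
    rw [hGd]
    simp only [norm_mul, Complex.norm_real, Real.norm_eq_abs]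
    have := psi_bd ψ hψ r R ξ
    rw [abs_of_nonneg this.1]
    exact mul_le_of_le_one_left (norm_nonneg _) this.2
  have hδ : ε1 / ε ≠ 0 := by rcases hε1 with rfl | rfl <;> positivity
  have hδa : |ε1 / ε| = 1 / ε := by
    rw [abs_div, abs_of_pos hε]
    rcases hε1 with rfl | rfl <;> simp
  refine final_enn (fun t => uu γ ε2 (ε1 / ε) G t) (MM γ ε2 (ε1 / ε) G) _ _ _ hF ENNReal.ofReal_ne_top ?_ ?_ ?_ ?_ p q hq hp
  · intro t
    refine le_trans ?_ hG2
    rw [hGd, ← PsiG_eq]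
    unfold PsiG
    set H : E3 → ℂ := fun ξ => ((Psi ψ r R ξ : ℝ) : ℂ) * Complex.exp (((t / ε : ℝ) : ℂ) * lamEV γ ε1 ε2 ξ) * FT f ξ with hHd
    have hHn : ∀ ξ, ‖H ξ‖ = ‖G ξ‖ := by
      intro ξ
      have : ‖Complex.exp (((t / ε : ℝ) : ℂ) * lamEV γ ε1 ε2 ξ)‖ = 1 := by
        unfold lamEV
        rw [Complex.norm_exp]
        simp
      rw [hHd, hGd]
      simp only [norm_mul, this, mul_one]
    have hHc : Continuous H := by
      have := psi_cont ψ hψ r R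
      have h2 : Continuous (lamEV γ ε1 ε2) := by unfold lamEV; fun_prop
      rw [hHd]
      fun_prop
    have hHi : Integrable H := hGi.congr' hHc.aestronglyMeasurable (Eventually.of_forall fun ξ => (hHn ξ).symm)
    have hH2 : eLpNorm H 2 volume = eLpNorm G 2 volume := eLpNorm_congr_norm_ae (Eventually.of_forall hHn)
    have hHm : MemLp H 2 volume := ⟨hHc.aestronglyMeasurable, by rw [hH2]; exact hG2.trans_lt hf.2⟩
    rw [planch_inv H hHi hHm, hH2]
  · intro t x
    exact sup_dense _ (uu_cont γ ε2 _ G hGi t) x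
  · intro t
    refine iSup_le fun n => ?_
    unfold uu
    refine (enorm_integral_le_lintegral_enorm _).trans ?_
    have : ∀ ξ, ‖osc γ ε2 (ε1 / ε * t) (TopologicalSpace.denseSeq E3 n) ξ * G ξ‖ₑ = ‖G ξ‖ₑ := by
      intro ξ
      rw [enorm_mul, ← ofReal_norm (osc _ _ _ _ _), osc_norm]; simp
    simp_rw [this]
    refine (cs_ball G hGc.aestronglyMeasurable R hR0 (fun ξ h => (hGs ξ h).2.2)).trans ?_
    gcongr
  · refine (MM_bound γ ε2 (ε1 / ε) R (C0 * (R ^ 3 / r ^ 2)) hδ (by positivity) (pieces r R) (hgood ε2 r R hε2 hr hr1 hR)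
      G hGc.measurable hGi ?_).trans ?_
    · intro ξ h
      obtain ⟨a, b, c⟩ := hGs ξ h
      exact pieces_cover r R ξ a b c
    · gcongr
      rw [hδa]
      have hcard : (Fintype.card (Option Bool × Bool × Bool) : ℝ) = 12 := by simp [Fintype.card_option] <;> norm_num
      rw [hcard, ENNReal.ofReal_rpow_of_nonneg (by positivity) (by norm_num)]
      apply ENNReal.ofReal_le_ofReal
      apply le_of_eq
      have e1 : 1 / √(1 / ε) = ε ^ (1/2:ℝ) := by rw [Real.sqrt_div zero_le_one, Real.sqrt_one, one_div_one_div, Real.sqrt_eq_rpow]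
      have e2 : R ^ (3/2:ℝ) = (R ^ (3:ℕ)) ^ (1/2:ℝ) := by
        rw [← Real.rpow_natCast, ← Real.rpow_mul hR0.le]; norm_num
      have e3 : ε ^ (1/4:ℝ) = (ε ^ (1/2:ℝ)) ^ (1/2:ℝ) := by rw [← Real.rpow_mul hε.le]; norm_num
      have e4 : r⁻¹ = ((r ^ 2)⁻¹) ^ (1/2:ℝ) := by
        rw [← Real.sqrt_eq_rpow, Real.sqrt_inv, Real.sqrt_sq hr.le]
      rw [e1, e2, e3, e4, hc1d, Real.sqrt_eq_rpow, ← Real.mul_rpow (by positivity) (by positivity), ← Real.mul_rpow (by positivity) (by positivity),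
        ← Real.mul_rpow (by positivity) (by positivity)]
      congr 1
      ring


/-- Strichartz estimate for the cut-off scalar propagator: for
`q ∈ (2,∞]` and `p ≥ 4q/(q−2)` (or `(p,q) = (∞,2)`), and every `f ∈ L²(ℝ³)`,
`‖Ψ_{r,R}(D)G_λ(·)f‖_{L^p((0,∞);L^q)} ≤ C R^{3/2−3/q} r^{−4/p} ε^{1/p} ‖f‖_{L²}`,
with `C` depending only on `γ̄`, `ψ`, `p`, `q`; the endpoint `p = 4q/(q−2)` included. -/
theorem strichartz_scalar (γ : ℝ) (hγ : 0 < γ) (ψ : ℝ → ℝ) (hψ : IsCutoff ψ)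
    (p q : ℝ≥0∞)
    (hpq : (p = ⊤ ∧ q = 2) ∨
      (2 < q ∧ ENNReal.ofReal (4 * q.toReal / (q.toReal - 2)) ≤ p ∧ (q = ⊤ → 4 ≤ p))) :
    ∃ C : ℝ, 0 < C ∧
      ∀ ε1 ε2 : ℝ, (ε1 = 1 ∨ ε1 = -1) → (ε2 = 1 ∨ ε2 = -1) →
      ∀ r R ε : ℝ, 0 < r → r ≤ 1 → 1 ≤ R → 0 < ε →
      ∀ f : E3 → ℂ, MemLp f 2 volume →
        eLpNorm (fun t => (eLpNorm (PsiG ψ r R γ ε1 ε2 ε t f) q volume).toReal) p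
            (volume.restrict (Set.Ioi (0:ℝ))) ≤
          ENNReal.ofReal (C * R ^ ((3:ℝ)/2 - 3 / q.toReal) * r ^ (-(4:ℝ) / p.toReal) *
              ε ^ (1 / p.toReal)) * eLpNorm f 2 volume := by
  exact strichartz_scalar' γ hγ ψ hψ p q hpq
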